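/- For every nonnegative integer n: (i) for all residues i, j ∈ {0,1,2}, the number of partition pairs (π₁,π₂) ∈ 𝒮𝒯 with |π₁|+|π₂| = 3n+2 and paircrank(π₁,π₂) ≡ i (mod 3) equals the number of such pairs with paircrank ≡ j (mod 3); (ii) for all residues i, j ∈ {0,1,2,3,4}, the number of pairs in 𝒮𝒯 of 5n+3 with paircrank ≡ i (mod 5) equals the number with paircrank ≡ j (mod 5); and (iii) likewise for pairs in 𝒮𝒯 of 5n+4 modulo 5. -/

import Mathlib

open scoped BigOperators

noncomputable section

/-- A partition is a finite multiset of positive integers. -/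
def IsPartition (π : Multiset ℕ) : Prop := ∀ x ∈ π, 0 < x

/-- The smallest part of a partition, with the convention `s(∅) = ∞`. -/
def sPart (π : Multiset ℕ) : ℕ∞ := (π.map (fun x => (x : ℕ∞))).inf

/-- The largest part of a partition, with the convention `ℓ(∅) = 0`. -/
def lPart (π : Multiset ℕ) : ℕ := π.sup

/-- Membership in the set 𝒮𝒯 of partition pairs: π₁ is nonempty,
`s(π₁) ≤ s(π₂)`, and `ℓ(π₂) < 2·s(π₁)`. -/
def InST (p : Multiset ℕ × Multiset ℕ) : Prop :=
  IsPartition p.1 ∧ IsPartition p.2 ∧ p.1 ≠ 0 ∧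
    sPart p.1 ≤ sPart p.2 ∧ (lPart p.2 : ℕ∞) < 2 * sPart p.1

/-- The paircrank of a partition pair: `#(π₁) − 1` if `π₂` is empty,
and `(# parts of π₁ that are ≥ s(π₁) + #(π₂)) − #(π₂)` otherwise. -/
def paircrank (p : Multiset ℕ × Multiset ℕ) : ℤ :=
  if p.2 = 0 then (Multiset.card p.1 : ℤ) - 1
  else (Multiset.countP (fun x => (sPart p.1).toNat + Multiset.card p.2 ≤ x) p.1 : ℤ)
    - Multiset.card p.2

open scoped PowerSeries.WithPiTopology

/-- Power series over `ℂ` in the variable `q`. -/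
abbrev PS := PowerSeries ℂ

/-- The variable. -/
abbrev qq : PS := PowerSeries.X

lemma ps_ext_dvd {f g : PS} (h : ∀ N : ℕ, qq ^ N ∣ f - g) : f = g := by
  ext n
  have := (PowerSeries.X_pow_dvd_iff.1 (h (n+1))) n (Nat.lt_succ_self n)
  rw [map_sub] at this
  exact sub_eq_zero.1 this

lemma ps_zero_dvd {f : PS} (h : ∀ N : ℕ, qq ^ N ∣ f) : f = 0 := by
  apply ps_ext_dvd
  simpa using h

/-- Locally finite families. -/
def LF {ι : Type*} (f : ι → PS) : Prop := ∀ N : ℕ, {i | ¬ qq ^ N ∣ f i}.Finite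

namespace LF

variable {ι κ : Type*} {f g : ι → PS}

lemma coeff_finite (h : LF f) (n : ℕ) : {i | PowerSeries.coeff n (f i) ≠ 0}.Finite := by
  refine (h (n+1)).subset ?_
  intro i hi hd
  exact hi (PowerSeries.X_pow_dvd_iff.1 hd n (Nat.lt_succ_self n))

lemma summable (h : LF f) : Summable f := by
  rw [PowerSeries.WithPiTopology.summable_iff_summable_coeff]
  intro n
  exact summable_of_hasFiniteSupport (h.coeff_finite n)

lemma coeff_tsum (h : LF f) (n : ℕ) :
    PowerSeries.coeff n (∑' i, f i) = ∑' i, PowerSeries.coeff n (f i) := by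
  have := ((PowerSeries.WithPiTopology.hasSum_iff_hasSum_coeff ℂ).1 h.summable.hasSum) n
  exact this.tsum_eq.symm

lemma coeff_tsum_eq_sum (h : LF f) (n : ℕ) (s : Finset ι)
    (hs : ∀ i ∉ s, PowerSeries.coeff n (f i) = 0) :
    PowerSeries.coeff n (∑' i, f i) = ∑ i ∈ s, PowerSeries.coeff n (f i) := by
  rw [h.coeff_tsum, tsum_eq_sum hs]

lemma dvd_tsum (h : LF f) (N : ℕ) (hd : ∀ i, qq ^ N ∣ f i) : qq ^ N ∣ ∑' i, f i := by
  rw [PowerSeries.X_pow_dvd_iff]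
  intro m hm
  rw [h.coeff_tsum]
  have : ∀ i, PowerSeries.coeff m (f i) = 0 := fun i => PowerSeries.X_pow_dvd_iff.1 (hd i) m hm
  simp [this]

lemma mono (h : LF f) (hd : ∀ i, f i ∣ g i) : LF g := by
  intro N
  refine (h N).subset ?_
  intro i hi hd'
  exact hi (hd'.trans (hd i))

lemma mul_left (h : LF f) (g : ι → PS) : LF (fun i => g i * f i) :=
  h.mono (fun _ => Dvd.intro_left _ rfl)

lemma mul_right (h : LF f) (g : ι → PS) : LF (fun i => f i * g i) :=
  h.mono (fun _ => Dvd.intro _ rfl)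

lemma comp (h : LF f) {e : κ → ι} (he : Function.Injective e) : LF (fun k => f (e k)) := by
  intro N
  exact (h N).preimage he.injOn

lemma add (hf : LF f) (hg : LF g) : LF (fun i => f i + g i) := by
  intro N
  refine ((hf N).union (hg N)).subset ?_
  intro i hi
  by_contra hc
  simp only [Set.mem_union, Set.mem_ofPred_eq, not_or, not_not] at hc
  exact hi (dvd_add hc.1 hc.2)

lemma neg (hf : LF f) : LF (fun i => - f i) := by
  refine hf.mono (fun i => ?_)
  exact (dvd_neg).2 dvd_rfl

lemma sub (hf : LF f) (hg : LF g) : LF (fun i => f i - g i) := by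
  simpa [sub_eq_add_neg] using hf.add hg.neg

lemma prod_mul {g : κ → PS} (hf : LF f) (hg : LF g) : LF (fun p : ι × κ => f p.1 * g p.2) := by
  intro N
  refine ((hf N).prod (hg N)).subset ?_
  rintro ⟨i, k⟩ hi
  refine ⟨fun h => hi (h.trans (Dvd.intro _ rfl)), fun h => hi (h.trans (Dvd.intro_left _ rfl))⟩

lemma tsum_mul_tsum {g : κ → PS} (hf : LF f) (hg : LF g) :
    (∑' i, f i) * (∑' k, g k) = ∑' p : ι × κ, f p.1 * g p.2 :=
  hf.summable.tsum_mul_tsum hg.summable (hf.prod_mul hg).summable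

lemma tsum_fiber_dvd {f : ι × κ → PS} (h : LF f) : LF (fun i => ∑' k, f (i, k)) := by
  intro N
  refine ((h N).image Prod.fst).subset ?_
  intro i hi
  by_contra hc
  apply hi
  apply LF.dvd_tsum
  · exact h.comp (fun a b hab => (Prod.mk.inj hab).2)
  · intro k
    by_contra hk
    exact hc ⟨(i, k), hk, rfl⟩

lemma tsum_prod {f : ι × κ → PS} (h : LF f) : ∑' p, f p = ∑' i, ∑' k, f (i, k) := by
  apply Summable.tsum_prod' h.summable
  intro i
  exact (h.comp (e := fun k => (i,k)) (fun a b hab => (Prod.mk.inj hab).2)).summable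

lemma tsum_comm {f : ι × κ → PS} (h : LF f) : ∑' i, ∑' k, f (i, k) = ∑' k, ∑' i, f (i, k) := by
  rw [← h.tsum_prod]
  have h2 : LF (fun p : κ × ι => f (p.2, p.1)) :=
    h.comp (e := fun p : κ × ι => (p.2, p.1)) Prod.swap_injective
  have := h2.tsum_prod
  rw [← this]
  exact ((Equiv.prodComm κ ι).tsum_eq f).symm

lemma tsum_add (hf : LF f) (hg : LF g) : ∑' i, (f i + g i) = ∑' i, f i + ∑' i, g i :=
  hf.summable.tsum_add hg.summable

lemma tsum_sub (hf : LF f) (hg : LF g) : ∑' i, (f i - g i) = ∑' i, f i - ∑' i, g i :=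
  hf.summable.tsum_sub hg.summable

lemma of_dvd_finite {e : ι → ℕ} (h : ∀ i, qq ^ (e i) ∣ f i) (hfin : ∀ N, {i | e i < N}.Finite) :
    LF f := by
  intro N
  refine (hfin N).subset ?_
  intro i hi
  by_contra hc
  exact hi ((pow_dvd_pow _ (not_lt.1 hc)).trans (h i))

lemma of_dvd_nat {f : ℕ → PS} (h : ∀ i, qq ^ i ∣ f i) : LF f :=
  of_dvd_finite (e := id) h (fun N => Set.finite_lt_nat N)

lemma of_dvd_nat' {f : ℕ → PS} {e : ℕ → ℕ} (h : ∀ i, qq ^ (e i) ∣ f i) (he : ∀ i, i ≤ e i) :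
    LF f :=
  of_dvd_nat (fun i => (pow_dvd_pow _ (he i)).trans (h i))

lemma of_dvd_int {f : ℤ → PS} (e : ℤ → ℤ) (h : ∀ i, qq ^ (e i).toNat ∣ f i)
    (B : ℤ) (he : ∀ i, |i| ≤ e i + B) : LF f := by
  refine of_dvd_finite h (fun N => ?_)
  refine (Set.finite_Icc (-(N + B + |B|)) (N + B + |B|)).subset ?_
  intro i hi
  have h1 := he i
  have hi' : (e i).toNat < N := hi
  have h2 : e i < N := by omega
  have h3 : |i| ≤ N + B := by omega
  have := abs_le.1 h3
  have hb := abs_nonneg B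
  constructor <;> omega

end LF

lemma ps_tsum_mul_left {ι : Type*} (a : PS) (f : ι → PS) (h : LF f) :
    ∑' i, a * f i = a * ∑' i, f i := h.summable.tsum_mul_left a

lemma ps_tsum_mul_right {ι : Type*} (a : PS) (f : ι → PS) (h : LF f) :
    ∑' i, f i * a = (∑' i, f i) * a := h.summable.tsum_mul_right a

/-- Antisymmetric sums vanish. -/
lemma tsum_antisymm {ι : Type*} (f : ι → PS) (e : ι ≃ ι) (h : ∀ i, f (e i) = - f i) :
    ∑' i, f i = 0 := by
  have h1 := e.tsum_eq f
  simp only [h, tsum_neg] at h1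
  have h2 : (2 : PS) * ∑' i, f i = 0 := by
    rw [two_mul]; nth_rewrite 1 [← h1]; ring
  rcases mul_eq_zero.1 h2 with h3 | h3
  · exfalso
    have := congrArg (PowerSeries.coeff 0) h3
    rw [← one_add_one_eq_two, map_add] at this
    simp at this
  · exact h3

/-! ### residue components -/

/-- The part of `f` with exponents `≡ r (mod m)`. -/
def rcmp {m : ℕ} (r : ZMod m) (f : PS) : PS :=
  PowerSeries.mk fun n => if (n : ZMod m) = r then PowerSeries.coeff n f else 0

lemma coeff_rcmp {m : ℕ} (r : ZMod m) (f : PS) (n : ℕ) :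
    PowerSeries.coeff n (rcmp r f) = if (n : ZMod m) = r then PowerSeries.coeff n f else 0 := by
  simp [rcmp]

lemma rcmp_add {m : ℕ} (r : ZMod m) (f g : PS) : rcmp r (f + g) = rcmp r f + rcmp r g := by
  ext n; simp only [coeff_rcmp, map_add]; split_ifs <;> simp

lemma rcmp_sub {m : ℕ} (r : ZMod m) (f g : PS) : rcmp r (f - g) = rcmp r f - rcmp r g := by
  ext n; simp only [coeff_rcmp, map_sub]; split_ifs <;> simp

lemma rcmp_neg {m : ℕ} (r : ZMod m) (f : PS) : rcmp r (-f) = - rcmp r f := by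
  ext n; simp only [coeff_rcmp, map_neg]; split_ifs <;> simp

lemma rcmp_zero {m : ℕ} (r : ZMod m) : rcmp r (0 : PS) = 0 := by
  ext n; simp [coeff_rcmp]

lemma rcmp_dvd {m : ℕ} (r : ZMod m) (f : PS) (N : ℕ) (h : qq ^ N ∣ f) : qq ^ N ∣ rcmp r f := by
  rw [PowerSeries.X_pow_dvd_iff] at *
  intro k hk
  rw [coeff_rcmp, h k hk]; simp

lemma LF.rcmp {ι : Type*} {f : ι → PS} (h : LF f) {m : ℕ} (r : ZMod m) :
    LF (fun i => rcmp r (f i)) := by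
  intro N
  refine (h N).subset (fun i hi hd => hi (rcmp_dvd r _ N hd))

lemma rcmp_tsum {ι : Type*} {f : ι → PS} (h : LF f) {m : ℕ} (r : ZMod m) :
    rcmp r (∑' i, f i) = ∑' i, rcmp r (f i) := by
  ext n
  rw [coeff_rcmp, (h.rcmp r).coeff_tsum, h.coeff_tsum]
  simp only [coeff_rcmp]
  split_ifs <;> simp

/-- `f` is supported on exponents with residues in `T`. -/
def SupR {m : ℕ} (T : Set (ZMod m)) (f : PS) : Prop :=
  ∀ n : ℕ, PowerSeries.coeff n f ≠ 0 → (n : ZMod m) ∈ T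

lemma SupR.mul {m : ℕ} {T U W : Set (ZMod m)} {f g : PS} (hf : SupR T f) (hg : SupR U g)
    (h : ∀ t ∈ T, ∀ u ∈ U, t + u ∈ W) : SupR W (f * g) := by
  intro n hn
  rw [PowerSeries.coeff_mul] at hn
  obtain ⟨⟨a, b⟩, hab, hne⟩ := Finset.exists_ne_zero_of_sum_ne_zero hn
  rw [Finset.HasAntidiagonal.mem_antidiagonal] at hab
  have ha := left_ne_zero_of_mul hne
  have hb := right_ne_zero_of_mul hne
  have := h _ (hf _ ha) _ (hg _ hb)
  simp only at hab this
  rw [← hab]; push_cast; exact this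

lemma SupR.add {m : ℕ} {T : Set (ZMod m)} {f g : PS} (hf : SupR T f) (hg : SupR T g) :
    SupR T (f + g) := by
  intro n hn
  by_contra hc
  apply hn
  rw [map_add]
  have h1 : PowerSeries.coeff n f = 0 := by by_contra h; exact hc (hf n h)
  have h2 : PowerSeries.coeff n g = 0 := by by_contra h; exact hc (hg n h)
  simp [h1, h2]

lemma SupR.neg {m : ℕ} {T : Set (ZMod m)} {f : PS} (hf : SupR T f) :
    SupR T (-f) := by
  intro n hn
  exact hf n (by simpa using hn)

lemma SupR.sub {m : ℕ} {T : Set (ZMod m)} {f g : PS} (hf : SupR T f) (hg : SupR T g) :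
    SupR T (f - g) := by
  rw [sub_eq_add_neg]; exact hf.add hg.neg

lemma SupR.mono {m : ℕ} {T U : Set (ZMod m)} {f : PS} (hf : SupR T f) (h : T ⊆ U) : SupR U f :=
  fun n hn => h (hf n hn)

lemma SupR.rcmp_self {m : ℕ} (r : ZMod m) (f : PS) : SupR {r} (rcmp r f) := by
  intro n hn
  rw [coeff_rcmp] at hn
  by_contra hc
  apply hn
  rw [if_neg]; exact hc

lemma SupR.part {m k : ℕ} {T : Set (ZMod m)} {f : PS} (hf : SupR T f) (r : ZMod k) :
    SupR T (rcmp r f) := by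
  intro n hn
  apply hf
  intro h
  apply hn
  rw [coeff_rcmp, h]; simp

lemma SupR.rcmp_eq_zero {m : ℕ} {T : Set (ZMod m)} {f : PS} (hf : SupR T f) (r : ZMod m)
    (hr : r ∉ T) : rcmp r f = 0 := by
  ext n
  rw [coeff_rcmp]
  split_ifs with h
  · by_contra hc
    exact hr (h ▸ hf n hc)
  · simp

lemma SupR.rcmp_eq_self {m : ℕ} {f : PS} {r : ZMod m} (hf : SupR {r} f) : rcmp r f = f := by
  ext n
  rw [coeff_rcmp]
  split_ifs with h
  · rfl
  · by_contra hc
    exact h (hf n (Ne.symm hc))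

lemma SupR.tsum {ι : Type*} {f : ι → PS} (h : LF f) {m : ℕ} {T : Set (ZMod m)}
    (hf : ∀ i, SupR T (f i)) : SupR T (∑' i, f i) := by
  intro n hn
  by_contra hc
  apply hn
  rw [h.coeff_tsum]
  have : ∀ i, PowerSeries.coeff n (f i) = 0 := by
    intro i; by_contra h; exact hc (hf i n h)
  simp [this]

lemma SupR.monomial {m : ℕ} {T : Set (ZMod m)} (k : ℕ) (c : ℂ) (h : c ≠ 0 → (k : ZMod m) ∈ T) :
    SupR T (PowerSeries.monomial k c) := by
  intro n hn
  rw [PowerSeries.coeff_monomial] at hn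
  split_ifs at hn with h1
  · rw [h1]; exact h hn
  · exact absurd rfl hn

lemma SupR.of_rcmp {m : ℕ} {T : Set (ZMod m)} {f : PS} (h : ∀ r ∉ T, rcmp r f = 0) :
    SupR T f := by
  intro n hn
  by_contra hc
  have := congrArg (PowerSeries.coeff n) (h _ hc)
  rw [coeff_rcmp] at this
  simp at this
  exact hn this

lemma rcmp_mul {m : ℕ} {f g : PS} {s : ZMod m} (hf : SupR {s} f) (r : ZMod m) :
    rcmp r (f * g) = f * rcmp (r - s) g := by
  ext n
  rw [coeff_rcmp, PowerSeries.coeff_mul, PowerSeries.coeff_mul]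
  by_cases h : (n : ZMod m) = r
  · rw [if_pos h]
    apply Finset.sum_congr rfl
    rintro ⟨a, b⟩ hab
    rw [Finset.HasAntidiagonal.mem_antidiagonal] at hab
    simp only at hab ⊢
    by_cases ha : PowerSeries.coeff a f = 0
    · simp [ha]
    · have h1 : (a : ZMod m) = s := hf a ha
      rw [coeff_rcmp, if_pos]
      rw [← h, ← hab, ← h1]; push_cast; ring
  · rw [if_neg h, eq_comm]
    apply Finset.sum_eq_zero
    rintro ⟨a, b⟩ hab
    rw [Finset.HasAntidiagonal.mem_antidiagonal] at hab
    simp only at hab ⊢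
    by_cases ha : PowerSeries.coeff a f = 0
    · simp [ha]
    · have h1 : (a : ZMod m) = s := hf a ha
      rw [coeff_rcmp, if_neg, mul_zero]
      intro h2
      apply h
      rw [← hab]; push_cast; rw [h1, h2]; ring

lemma rcmp_mul' {m : ℕ} {f g : PS} {s : ZMod m} (hf : SupR {s} f) (r : ZMod m) :
    rcmp r (g * f) = rcmp (r - s) g * f := by
  rw [mul_comm, rcmp_mul hf, mul_comm]

lemma sum_rcmp {m : ℕ} [NeZero m] (f : PS) : ∑ r : ZMod m, rcmp r f = f := by
  ext n
  rw [map_sum]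
  simp [coeff_rcmp]

lemma rcmp_cmp_comm {m k : ℕ} (r : ZMod m) (s : ZMod k) (f : PS) :
    rcmp r (rcmp s f) = rcmp s (rcmp r f) := by
  ext n
  simp only [coeff_rcmp]
  split_ifs <;> rfl

/-! ### infinite products -/

lemma dvd_mul_sub_mul' {d a b c e : PS} (h1 : d ∣ a - b) (h2 : d ∣ c - e) :
    d ∣ a * c - b * e := by
  have : a * c - b * e = (a - b) * c + b * (c - e) := by ring
  rw [this]
  exact dvd_add (h1.mul_right _) (h2.mul_left _)

lemma LF.multipliable {f : ℕ → PS} (h : LF f) : Multipliable (fun i => 1 + f i) := by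
  apply PowerSeries.WithPiTopology.multipliable_one_add_of_tendsto_order_atTop_nhds_top
  refine ENat.tendsto_nhds_top_iff_natCast_lt.mpr (fun n => Filter.eventually_atTop.mpr ?_)
  obtain ⟨B, hB⟩ := (h (n+1)).bddAbove
  refine ⟨B + 1, fun m hm => ?_⟩
  have hd : qq ^ (n+1) ∣ f m := by
    by_contra hc
    have := hB hc
    omega
  have h1 : ((n+1 : ℕ) : ℕ∞) ≤ (f m).order := by
    apply PowerSeries.le_order
    intro i hi
    exact PowerSeries.X_pow_dvd_iff.1 hd i (by exact_mod_cast hi)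
  refine lt_of_lt_of_le ?_ h1
  exact_mod_cast Nat.lt_succ_self n

lemma LF.multipliable_sub {f : ℕ → PS} (h : LF f) : Multipliable (fun i => 1 - f i) := by
  simpa [sub_eq_add_neg] using h.neg.multipliable

lemma dvd_prod_sub_one {ι : Type*} {g : ι → PS} (s : Finset ι) {d : PS}
    (h : ∀ i ∈ s, d ∣ g i - 1) : d ∣ ∏ i ∈ s, g i - 1 := by
  classical
  induction s using Finset.induction_on with
  | empty => simp
  | insert a s ha ih =>
    rw [Finset.prod_insert ha]
    have h1 := h a (Finset.mem_insert_self _ _)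
    have h2 := ih (fun i hi => h i (Finset.mem_insert_of_mem hi))
    simpa using dvd_mul_sub_mul' h1 h2

lemma dvd_tprod_sub {g : ℕ → PS} (hg : Multipliable g) (N M : ℕ)
    (h : ∀ i, M ≤ i → qq ^ N ∣ g i - 1) : qq ^ N ∣ ∏' i, g i - ∏ i ∈ Finset.range M, g i := by
  rw [PowerSeries.X_pow_dvd_iff]
  intro n hn
  have ht := hg.tendsto_prod_tprod_nat
  have ht' := ((PowerSeries.WithPiTopology.continuous_coeff ℂ n).tendsto _).comp ht
  have hev : ∀ᶠ K in Filter.atTop, PowerSeries.coeff n (∏ i ∈ Finset.range K, g i) =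
      PowerSeries.coeff n (∏ i ∈ Finset.range M, g i) := by
    filter_upwards [Filter.eventually_ge_atTop M] with K hK
    have h1 : qq ^ N ∣ ∏ i ∈ Finset.Ico M K, g i - 1 :=
      dvd_prod_sub_one _ (fun i hi => h i (Finset.mem_Ico.1 hi).1)
    have h2 := Finset.prod_range_mul_prod_Ico g hK
    have h3 : qq ^ N ∣ ∏ i ∈ Finset.range K, g i - ∏ i ∈ Finset.range M, g i := by
      rw [← h2]
      have := h1.mul_left (∏ i ∈ Finset.range M, g i)
      rwa [mul_sub, mul_one] at this
    have := PowerSeries.X_pow_dvd_iff.1 h3 n hn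
    rw [map_sub] at this
    exact sub_eq_zero.1 this
  have hc : Filter.Tendsto (fun K => PowerSeries.coeff n (∏ i ∈ Finset.range K, g i))
      Filter.atTop (nhds (PowerSeries.coeff n (∏ i ∈ Finset.range M, g i))) :=
    tendsto_const_nhds.congr' (hev.mono (fun K hK => hK.symm))
  have := tendsto_nhds_unique ht' hc
  rw [map_sub, this, sub_self]

/-- `(z;q)_n` -/
def ppoch (z q : PS) (n : ℕ) : PS := ∏ i ∈ Finset.range n, (1 - z * q ^ i)

/-- `(z;q)_∞` -/
def pinf (z q : PS) : PS := ∏' i : ℕ, (1 - z * q ^ i)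

section

lemma lf_pow {q : PS} (hq : qq ∣ q) (z : PS) : LF (fun i : ℕ => z * q ^ i) :=
  LF.of_dvd_nat (fun i => (pow_dvd_pow_of_dvd hq i).mul_left z)

lemma pinf_mult {q : PS} (hq : qq ∣ q) (z : PS) : Multipliable (fun i : ℕ => 1 - z * q ^ i) :=
  (lf_pow hq z).multipliable_sub

lemma pinf_dvd {q : PS} (hq : qq ∣ q) (z : PS) {N M : ℕ} (h : ∀ i, M ≤ i → qq ^ N ∣ z * q ^ i) :
    qq ^ N ∣ pinf z q - ppoch z q M := by
  apply dvd_tprod_sub (pinf_mult hq z)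
  intro i hi
  have := h i hi
  rw [show (1 : PS) - z * q ^ i - 1 = -(z * q ^ i) by ring]
  exact (dvd_neg).2 this

lemma pinf_dvd' {q : PS} (hq : qq ∣ q) (z : PS) (N : ℕ) : qq ^ N ∣ pinf z q - ppoch z q N :=
  pinf_dvd hq z (fun _ hi => ((pow_dvd_pow _ hi).trans (pow_dvd_pow_of_dvd hq _)).mul_left z)

lemma pinf_dvd_one {q : PS} (hq : qq ∣ q) {z : PS} {N : ℕ} (h : qq ^ N ∣ z) : qq ^ N ∣ pinf z q - 1 := by
  have := pinf_dvd hq z (N := N) (M := 0) (fun i _ => h.mul_right _)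
  simpa [ppoch] using this

lemma ppoch_dvd_one {q : PS} {z : PS} {N : ℕ} (h : qq ^ N ∣ z) (m : ℕ) : qq ^ N ∣ ppoch z q m - 1 := by
  apply dvd_prod_sub_one
  intro i _
  rw [show (1 : PS) - z * q ^ i - 1 = -(z * q ^ i) by ring]
  exact (dvd_neg).2 (h.mul_right _)

lemma ppoch_succ {q : PS} (z : PS) (n : ℕ) : ppoch z q (n+1) = ppoch z q n * (1 - z * q ^ n) :=
  Finset.prod_range_succ _ _

@[simp] lemma ppoch_zero {q : PS} (z : PS) : ppoch z q 0 = 1 := rfl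

lemma ppoch_add {q : PS} (z : PS) (m n : ℕ) : ppoch z q (m + n) = ppoch z q m * ppoch (z * q ^ m) q n := by
  unfold ppoch
  rw [Finset.prod_range_add]
  congr 1
  apply Finset.prod_congr rfl
  intro i _
  rw [pow_add]; ring

lemma pinf_split {q : PS} (hq : qq ∣ q) (z : PS) (n : ℕ) : pinf z q = ppoch z q n * pinf (z * q ^ n) q := by
  apply ps_ext_dvd
  intro N
  have h1 := (pow_dvd_pow qq (Nat.le_add_left N n)).trans (pinf_dvd' hq z (n + N))
  have h2 := (pinf_dvd' hq (z * q ^ n) N).mul_left (ppoch z q n)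
  rw [ppoch_add] at h1
  have := dvd_sub h1 h2
  convert this using 1
  ring

lemma pinf_step {q : PS} (hq : qq ∣ q) (z : PS) : pinf z q = (1 - z) * pinf (z * q) q := by
  have := pinf_split hq z 1
  simpa [ppoch] using this

lemma const_one_of_dvd {f : PS} (h : qq ^ 1 ∣ f - 1) : PowerSeries.constantCoeff f = 1 := by
  have := PowerSeries.X_pow_dvd_iff.1 h 0 Nat.one_pos
  rw [map_sub] at this
  simpa [sub_eq_zero] using this

lemma pinf_ne_zero {q : PS} (hq : qq ∣ q) {z : PS} (h : qq ∣ z) : pinf z q ≠ 0 := by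
  intro h0
  have := const_one_of_dvd (pinf_dvd_one hq (N := 1) (by simpa using h))
  rw [h0] at this
  simp at this

/-- `1/(q)_n`, extended by zero to negative `n` -/
def ip (q : PS) (n : ℤ) : PS := if n < 0 then 0 else (ppoch q q n.toNat)⁻¹

lemma pp_const {q : PS} (hq : qq ∣ q) (n : ℕ) : PowerSeries.constantCoeff (ppoch q q n) ≠ 0 := by
  rw [const_one_of_dvd (ppoch_dvd_one (N := 1) (by simpa using hq) n)]
  exact one_ne_zero

lemma ip_neg {q : PS} {n : ℤ} (h : n < 0) : ip q n = 0 := by simp [ip, h]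

lemma pp_mul_ip {q : PS} (hq : qq ∣ q) (n : ℕ) : ppoch q q n * ip q n = 1 := by
  simp only [ip, Int.toNat_natCast]
  rw [if_neg (by omega)]
  exact PowerSeries.mul_inv_cancel _ (pp_const hq n)

lemma pp_ne_zero {q : PS} (hq : qq ∣ q) (n : ℕ) : ppoch q q n ≠ 0 := by
  intro h
  have := pp_mul_ip hq n
  rw [h] at this
  simp at this

lemma ip_rec {q : PS} (hq : qq ∣ q) {n : ℤ} (h : 0 ≤ n) : ip q (n - 1) = (1 - q ^ n.toNat) * ip q n := by
  lift n to ℕ using h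
  rcases n with _ | n
  · rw [ip_neg (by simp)]; simp
  · have h1 := pp_mul_ip hq n
    have h2 := pp_mul_ip hq (n+1)
    rw [ppoch_succ] at h2
    have h3 : (((n+1 : ℕ) : ℤ) - 1) = (n : ℤ) := by push_cast; ring
    rw [h3, Int.toNat_natCast]
    apply mul_left_cancel₀ (pp_ne_zero hq n)
    rw [h1]
    linear_combination -h2

end

/-- general term of the theta series -/
def tt (z v q : PS) : ℤ → PS
  | Int.ofNat k => (-1) ^ k * (z ^ k * q ^ (k.choose 2))
  | Int.negSucc k => (-1) ^ (k+1) * (v ^ (k+1) * q ^ ((k+1).choose 2))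

lemma tt_nat (z v q : PS) (k : ℕ) : tt z v q (k : ℤ) = (-1) ^ k * (z ^ k * q ^ (k.choose 2)) := rfl

lemma tt_neg_nat (z v q : PS) (k : ℕ) :
    tt z v q (-(k : ℤ)) = (-1) ^ k * (v ^ k * q ^ (k.choose 2)) := by
  rcases k with _ | k
  · rw [Nat.cast_zero, neg_zero, ← Nat.cast_zero, tt_nat]; simp
  · rfl

lemma tt_symm (z v q : PS) (n : ℤ) : tt z v q (-n) = tt v z q n := by
  obtain ⟨k, rfl | rfl⟩ := n.eq_nat_or_neg
  · rw [tt_neg_nat, tt_nat]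
  · rw [neg_neg, tt_nat, tt_neg_nat]

lemma choose_two_succ (k : ℕ) : (k+1).choose 2 = k.choose 2 + k := by
  rw [Nat.choose_succ_succ' k 1]; simp; ring

lemma tt_rec (z v q : PS) (h : z * v = q) (a : ℕ) (n : ℤ) (hn : n ≤ a) :
    z * q ^ a * tt z v q n = - (q ^ (a - n).toNat * tt z v q (n + 1)) := by
  obtain ⟨k, rfl | rfl⟩ := n.eq_nat_or_neg
  · obtain ⟨d, rfl⟩ : ∃ d, a = k + d := ⟨a - k, by omega⟩
    rw [show ((k + d : ℕ) : ℤ) - (k : ℤ) = (d : ℤ) by push_cast; ring, Int.toNat_natCast,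
      show (k : ℤ) + 1 = ((k + 1 : ℕ) : ℤ) by push_cast; ring, tt_nat, tt_nat, choose_two_succ]
    ring
  · rcases k with _ | k
    · simp only [Nat.cast_zero, neg_zero, zero_add, sub_zero, Int.toNat_natCast]
      rw [show (0:ℤ) = ((0:ℕ):ℤ) from rfl, tt_nat, show (1:ℤ) = ((1:ℕ):ℤ) from rfl, tt_nat]
      simp; ring
    · rw [show (a : ℤ) - -((k+1 : ℕ) : ℤ) = ((a + (k + 1) : ℕ) : ℤ) by push_cast; ring,
        Int.toNat_natCast, show -((k+1 : ℕ) : ℤ) + 1 = -(k : ℤ) by push_cast; ring,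
        tt_neg_nat, tt_neg_nat, choose_two_succ]
      have : v ^ (k+1) * z = v ^ k * q := by rw [← h]; ring
      linear_combination (q ^ a * (-1) ^ (k+1) * q ^ (k.choose 2 + k)) * this

/-- the finite Jacobi triple product -/
def FJ (z v q : PS) (a b : ℕ) : Prop :=
  ppoch z q a * ppoch v q b =
    ppoch q q (a + b) * ∑' n : ℤ, tt z v q n * (ip q (a - n) * ip q (b + n))

lemma lf_fj (g : ℤ → PS) (q : PS) (a b : ℤ) : LF (fun n : ℤ => g n * (ip q (a - n) * ip q (b + n))) := by
  intro N
  refine (Set.finite_Icc (-b) a).subset ?_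
  intro n hn
  by_contra hc
  apply hn
  simp only [Set.mem_Icc, not_and_or, not_le] at hc
  rcases hc with hc | hc
  · simp only; rw [ip_neg (n := b + n) (by omega)]; simp
  · simp only; rw [ip_neg (n := a - n) (by omega)]; simp

lemma FJ_symm {z v q : PS} {a b : ℕ} (h : FJ z v q a b) : FJ v z q b a := by
  unfold FJ at *
  rw [mul_comm, h, add_comm b a]
  congr 1
  rw [← (Equiv.neg ℤ).tsum_eq]
  apply tsum_congr
  intro n
  simp only [Equiv.neg_apply]
  rw [tt_symm, mul_comm (ip q _)]
  congr 3; ring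

lemma FJ_zero {z v q : PS} (hq : qq ∣ q) : FJ z v q 0 0 := by
  unfold FJ
  have h0 := pp_mul_ip hq 0
  simp only [ppoch_zero, one_mul, Nat.cast_zero] at h0
  rw [tsum_eq_single 0]
  · have := tt_nat z v q 0
    simp only [Nat.cast_zero, pow_zero, Nat.choose_zero_succ, mul_one] at this
    simp [this, h0]
  · intro n hn
    rcases lt_or_gt_of_ne hn with h | h
    · rw [ip_neg (n := ((0:ℕ):ℤ) + n) (by simpa using h)]; simp
    · rw [ip_neg (n := ((0:ℕ):ℤ) - n) (by simpa using h)]; simp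

lemma FJ_step {z v q : PS} (hq : qq ∣ q) (hzv : z * v = q) {a b : ℕ} (h : FJ z v q a b) :
    FJ z v q (a+1) b := by
  unfold FJ at *
  rw [ppoch_succ, show a + 1 + b = a + b + 1 by ring, ppoch_succ]
  have hF := lf_fj (tt z v q) q a b
  have key : (1 - z * q ^ a) * ∑' n : ℤ, tt z v q n * (ip q (a - n) * ip q (b + n)) =
      (1 - q * q ^ (a+b)) * ∑' n : ℤ, tt z v q n * (ip q ((a+1 : ℕ) - n) * ip q (b + n)) := by
    rw [sub_mul, one_mul, ← ps_tsum_mul_left (z * q ^ a) _ hF,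
      ← ps_tsum_mul_left (1 - q * q ^ (a+b)) _ (lf_fj _ q _ b)]
    have e1 : ∑' n : ℤ, z * q ^ a * (tt z v q n * (ip q (a - n) * ip q (b + n))) =
        ∑' n : ℤ, (-(q ^ (a - n + 1).toNat * tt z v q n)) *
          (ip q (((a + 1 : ℤ)) - n) * ip q ((b - 1 : ℤ) + n)) := by
      rw [← (Equiv.addRight (1:ℤ)).tsum_eq (fun n : ℤ => (-(q ^ (a - n + 1).toNat * tt z v q n)) *
          (ip q (((a + 1 : ℤ)) - n) * ip q ((b - 1 : ℤ) + n)))]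
      apply tsum_congr
      intro n
      simp only [Equiv.coe_addRight]
      rw [show (a : ℤ) + 1 - (n + 1) = a - n by ring, show (b : ℤ) - 1 + (n + 1) = b + n by ring,
        show (a : ℤ) - (n+1) + 1 = a - n by ring]
      by_cases hn : n ≤ a
      · rw [← tt_rec z v q hzv a n hn]; ring
      · rw [ip_neg (n := (a : ℤ) - n) (by omega)]; simp
    rw [e1, ← LF.tsum_sub hF (lf_fj _ q _ _)]
    apply tsum_congr
    intro n
    push_cast
    by_cases h1 : (a : ℤ) + 1 - n < 0
    · rw [ip_neg h1, ip_neg (n := (a : ℤ) - n) (by omega)]; simp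
    by_cases h2 : (b : ℤ) + n < 0
    · rw [ip_neg h2, ip_neg (n := (b : ℤ) - 1 + n) (by omega)]; simp
    have r1 := ip_rec hq (n := (a : ℤ) + 1 - n) (by omega)
    have r2 := ip_rec hq (n := (b : ℤ) + n) (by omega)
    rw [show (a : ℤ) + 1 - n - 1 = a - n by ring] at r1
    rw [show (b : ℤ) + n - 1 = b - 1 + n by ring] at r2
    rw [r1, r2, show (a : ℤ) - n + 1 = a + 1 - n by ring]
    have hs : q * q ^ (a + b) = q ^ ((a : ℤ) + 1 - n).toNat * q ^ ((b : ℤ) + n).toNat := by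
      rw [← pow_succ', ← pow_add]; congr 1; omega
    rw [hs]
    ring
  calc _ = (1 - z * q ^ a) * (ppoch z q a * ppoch v q b) := by ring
    _ = _ := by rw [h, mul_left_comm, key]; ring

lemma finJTP {z v q : PS} (hq : qq ∣ q) (hzv : z * v = q) (a b : ℕ) : FJ z v q a b := by
  have h1 : ∀ (z v : PS), z * v = q → FJ z v q 0 0 → ∀ a, FJ z v q a 0 := by
    intro z v hzv h0 a
    induction a with
    | zero => exact h0
    | succ a ih => exact FJ_step hq hzv ih
  have h2 : FJ z v q 0 b := FJ_symm (h1 v z (by rw [mul_comm, hzv]) (FJ_zero hq) b)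
  induction a with
  | zero => exact h2
  | succ a ih => exact FJ_step hq hzv ih

lemma tt_dvd {z v q : PS} (hq : qq ∣ q) (n : ℤ) (N : ℕ) (h : N + 1 ≤ n.natAbs) :
    qq ^ N ∣ tt z v q n := by
  have key : ∀ k : ℕ, N + 1 ≤ k → qq ^ N ∣ q ^ (k.choose 2) := by
    intro k hk
    refine (pow_dvd_pow qq ?_).trans (pow_dvd_pow_of_dvd hq _)
    obtain ⟨k, rfl⟩ : ∃ j, k = j + 1 := ⟨k - 1, by omega⟩
    rw [choose_two_succ]; omega
  obtain ⟨k, rfl | rfl⟩ := n.eq_nat_or_neg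
  · rw [tt_nat]
    exact ((key k (by omega)).mul_left _).mul_left _
  · rw [tt_neg_nat]
    exact ((key k (by omega)).mul_left _).mul_left _

lemma lf_tt {z v q : PS} (hq : qq ∣ q) : LF (tt z v q) := by
  intro N
  refine (Set.finite_Icc (-(N:ℤ)) N).subset ?_
  intro n hn
  by_contra hc
  apply hn
  apply tt_dvd hq
  simp only [Set.mem_Icc, not_and_or, not_le] at hc
  omega

/-- the Jacobi triple product -/
theorem JTP {z v q : PS} (hq : qq ∣ q) (hzv : z * v = q) :
    pinf z q * pinf v q * pinf q q = ∑' n : ℤ, tt z v q n := by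
  apply ps_ext_dvd
  intro N
  have hF : FJ z v q (2*N) (2*N) := finJTP hq hzv _ _
  unfold FJ at hF
  have lf0 := lf_fj (tt z v q) q (2*N : ℕ) (2*N : ℕ)
  have c1 : qq ^ N ∣ pinf z q * pinf v q - ppoch z q (2*N) * ppoch v q (2*N) :=
    (pow_dvd_pow qq (by omega)).trans (dvd_mul_sub_mul' (pinf_dvd' hq z (2*N)) (pinf_dvd' hq v (2*N)))
  have c2 : qq ^ N ∣ ppoch z q (2*N) * ppoch v q (2*N) * pinf q q - ∑' n : ℤ, tt z v q n := by
    rw [hF]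
    have : ppoch q q (2 * N + 2 * N) * (∑' n : ℤ, tt z v q n *
        (ip q ((2 * N : ℕ) - n) * ip q ((2 * N : ℕ) + n))) * pinf q q =
        (ppoch q q (2 * N + 2 * N) * pinf q q) * (∑' n : ℤ, tt z v q n *
        (ip q ((2 * N : ℕ) - n) * ip q ((2 * N : ℕ) + n))) := by ring
    rw [this, ← ps_tsum_mul_left _ _ lf0, ← LF.tsum_sub (lf0.mul_left _) (lf_tt hq)]
    apply LF.dvd_tsum ((lf0.mul_left _).sub (lf_tt hq))
    intro n
    by_cases hn : N + 1 ≤ n.natAbs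
    · have := tt_dvd (z := z) (v := v) hq n N hn
      exact dvd_sub ((this.mul_right _).mul_left _) this
    · obtain ⟨a, ha⟩ : ∃ a : ℕ, ((2*N : ℕ) : ℤ) - n = a := ⟨_, (Int.toNat_of_nonneg (by omega)).symm⟩
      obtain ⟨b, hb⟩ : ∃ b : ℕ, ((2*N : ℕ) : ℤ) + n = b := ⟨_, (Int.toNat_of_nonneg (by omega)).symm⟩
      rw [ha, hb]
      have i1 := pp_mul_ip hq a
      have i2 := pp_mul_ip hq b
      have s1 := pinf_split hq q a
      have s2 : ppoch q q (2*N+2*N) = ppoch q q b * ppoch (q * q ^ b) q a := by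
        rw [show 2*N+2*N = b + a by omega]; exact ppoch_add q b a
      have d1 : qq ^ N ∣ ppoch (q * q ^ b) q a - 1 := by
        apply ppoch_dvd_one
        exact ((pow_dvd_pow qq (by omega : N ≤ b)).trans (pow_dvd_pow_of_dvd hq _)).mul_left _
      have d2 : qq ^ N ∣ pinf (q * q ^ a) q - 1 := by
        apply pinf_dvd_one hq
        exact ((pow_dvd_pow qq (by omega : N ≤ a)).trans (pow_dvd_pow_of_dvd hq _)).mul_left _
      have d3 := dvd_mul_sub_mul' d1 d2
      have := d3.mul_left (tt z v q n)
      convert this using 1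
      rw [s1, s2]
      linear_combination (tt z v q n * ppoch (q * q ^ b) q a * pinf (q * q ^ a) q) *
        (ppoch q q b * ip q b * i1 + i2)
  have := dvd_add (c1.mul_right (pinf q q)) c2
  convert this using 1
  ring

lemma qq_dvd : qq ∣ qq := dvd_rfl

/-- `(q;q)_∞` -/
def PP : PS := pinf qq qq

lemma PP_ne_zero : PP ≠ 0 := pinf_ne_zero qq_dvd dvd_rfl

lemma tsum_sub_range_dvd {f : ℕ → PS} (h : ∀ i, qq ^ i ∣ f i) (M : ℕ) :
    qq ^ M ∣ ∑' i, f i - ∑ i ∈ Finset.range M, f i := by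
  have hl := LF.of_dvd_nat h
  have h1 := hl.summable.sum_add_tsum_nat_add M
  rw [← h1, add_sub_cancel_left]
  apply LF.dvd_tsum
  · exact hl.comp (fun a b hab => by simpa using hab)
  · intro i
    exact (pow_dvd_pow _ (by omega)).trans (h (i + M))

lemma PP_ip_dvd (n : ℕ) : qq ^ n ∣ PP * ip qq n - 1 := by
  have h1 := pinf_split qq_dvd qq n
  have h2 := pp_mul_ip qq_dvd n
  have h3 : qq ^ n ∣ pinf (qq * qq ^ n) qq - 1 :=
    pinf_dvd_one qq_dvd (Dvd.intro_left _ rfl)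
  convert h3 using 1
  unfold PP
  rw [h1]
  linear_combination pinf (qq * qq ^ n) qq * h2

/-- conjugate Bailey series -/
def Psi (k : ℕ) : PS := PP ^ 2 * ∑' m : ℕ, qq ^ m * (ip qq m * ip qq ((m + k : ℕ) : ℤ))

lemma Psi_rec (k : ℕ) : Psi k + qq ^ (k+1) * Psi (k+1) = 1 := by
  have hd : ∀ k m : ℕ, qq ^ m ∣ qq ^ m * (ip qq m * ip qq ((m + k : ℕ) : ℤ)) :=
    fun k m => Dvd.intro _ rfl
  have hl := fun k => LF.of_dvd_nat (hd k)
  set g : ℕ → PS := fun m => qq ^ m * (ip qq m * ip qq ((m + k : ℕ) : ℤ)) +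
    qq ^ (k+1) * (qq ^ m * (ip qq m * ip qq ((m + (k+1) : ℕ) : ℤ))) with hg
  have hs : Psi k + qq ^ (k+1) * Psi (k+1) = PP ^ 2 * ∑' m, g m := by
    unfold Psi
    rw [hg, LF.tsum_add (hl k) ((hl (k+1)).mul_left _), ps_tsum_mul_left _ _ (hl (k+1))]
    ring
  have hpart : ∀ M, ∑ m ∈ Finset.range M, g m =
      ip qq ((M : ℤ) - 1) * ip qq (((M + k : ℕ) : ℤ)) := by
    intro M
    induction M with
    | zero => simp [ip_neg]
    | succ M ih =>
      rw [Finset.sum_range_succ, ih, hg]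
      simp only
      have r1 := ip_rec qq_dvd (n := (M : ℤ)) (by omega)
      have r2 := ip_rec qq_dvd (n := ((M + (k + 1) : ℕ) : ℤ)) (by omega)
      rw [show (((M + (k+1) : ℕ) : ℤ)) - 1 = ((M + k : ℕ) : ℤ) by push_cast; ring] at r2
      rw [show (((M + 1 : ℕ) : ℤ)) - 1 = ((M : ℕ) : ℤ) by push_cast; ring,
        show M + 1 + k = M + (k+1) by ring, r1, r2]
      simp only [Int.toNat_natCast]
      ring
  have hgd : ∀ m, qq ^ m ∣ g m := fun m => dvd_add (hd k m) ((hd (k+1) m).mul_left _)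
  rw [hs]
  apply ps_ext_dvd
  intro N
  have h1 := (pow_dvd_pow qq (Nat.le_succ N)).trans
    ((tsum_sub_range_dvd hgd (N+1)).mul_left (PP ^ 2))
  rw [hpart, show (((N + 1 : ℕ) : ℤ)) - 1 = ((N : ℕ) : ℤ) by push_cast; ring] at h1
  have h2 := dvd_mul_sub_mul' (PP_ip_dvd N)
    ((pow_dvd_pow qq (by omega : N ≤ N + 1 + k)).trans (PP_ip_dvd (N + 1 + k)))
  have := dvd_add h1 h2
  convert this using 1
  ring

lemma lf_Psi_explicit (k : ℕ) :
    LF (fun r : ℕ => (-1 : PS) ^ r * qq ^ ((r+1).choose 2 + k * r)) := by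
  apply LF.of_dvd_nat
  intro i
  refine Dvd.dvd.mul_left (pow_dvd_pow _ ?_) _
  rw [choose_two_succ]
  exact (Nat.le_add_left _ _).trans (Nat.le_add_right _ _)

lemma Psi_explicit (k : ℕ) : Psi k = ∑' r : ℕ, (-1 : PS) ^ r * qq ^ ((r+1).choose 2 + k * r) := by
  set W : ℕ → PS := fun k => ∑' r : ℕ, (-1 : PS) ^ r * qq ^ ((r+1).choose 2 + k * r) with hW
  have hrec : ∀ k, W k + qq ^ (k+1) * W (k+1) = 1 := by
    intro k
    have h1 := (lf_Psi_explicit k).summable.tsum_eq_zero_add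
    rw [hW]
    simp only
    rw [h1, ← ps_tsum_mul_left _ _ (lf_Psi_explicit (k+1))]
    have : ∑' r : ℕ, qq ^ (k+1) * ((-1 : PS) ^ r * qq ^ ((r+1).choose 2 + (k+1) * r)) =
        - ∑' r : ℕ, (-1 : PS) ^ (r+1) * qq ^ ((r+1+1).choose 2 + k * (r+1)) := by
      rw [← tsum_neg]
      apply tsum_congr
      intro r
      rw [choose_two_succ (r+1), pow_succ (-1 : PS)]
      have : (r+1).choose 2 + (r+1) + k * (r+1) = (k+1) + ((r+1).choose 2 + (k+1) * r) := by ring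
      rw [this, pow_add qq (k+1)]
      ring
    rw [this]
    simp
  have hdiff : ∀ N k, qq ^ N ∣ Psi k - W k := by
    intro N
    induction N with
    | zero => intro k; simp
    | succ N ih =>
      intro k
      have h1 := Psi_rec k
      have h2 := hrec k
      have : Psi k - W k = - (qq ^ k * (qq * (Psi (k+1) - W (k+1)))) := by
        linear_combination h1 - h2
      rw [this, pow_succ', dvd_neg]
      exact (mul_dvd_mul_left qq (ih (k+1))).mul_left _
  exact ps_ext_dvd (fun N => hdiff N k)

/-- the coefficient series -/
def psi (j : ℤ) : PS :=
  PP ^ 2 * ∑' N : ℕ, qq ^ (N+1) * (ip qq ((N + 1 : ℤ) - j) * ip qq ((N : ℤ) + j))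

lemma psi_symm (j : ℤ) : psi (1 - j) = psi j := by
  unfold psi
  congr 1
  apply tsum_congr
  intro N
  rw [mul_comm (ip qq _)]
  congr 3 <;> ring

lemma psi_nat (i : ℕ) : psi ((i : ℤ) + 1) = qq ^ (i+1) * Psi (2 * i + 1) := by
  unfold psi Psi
  rw [mul_left_comm]
  congr 1
  rw [← ps_tsum_mul_left _ _ (LF.of_dvd_nat (fun m => Dvd.intro _ rfl))]
  rw [← (add_left_injective i).tsum_eq]
  · apply tsum_congr
    intro m
    have e1 : ((m + i : ℕ) : ℤ) + 1 - (i + 1) = (m : ℤ) := by push_cast; ring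
    have e2 : ((m + i : ℕ) : ℤ) + (i + 1) = ((m + (2 * i + 1) : ℕ) : ℤ) := by push_cast; ring
    rw [e1, e2]
    rw [show m + i + 1 = (i+1) + m by ring, pow_add qq (i+1)]
    ring
  · intro N hN
    by_contra hc
    apply hN
    have : N < i := by
      by_contra h
      exact hc ⟨N - i, by simp; omega⟩
    beta_reduce
    rw [ip_neg (n := (N : ℤ) + 1 - (i + 1)) (by omega)]
    simp

/-- the Hecke type expansion -/
lemma FF_expand {z v : PS} (hzv : z * v = qq) :
    ∑' N : ℕ, qq ^ (N+1) * (pinf (qq ^ (2*N+2)) qq * PP * (ppoch z qq (N+1) * ppoch v qq N)) =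
      ∑' j : ℤ, tt z v qq j * psi j := by
  set G : ℕ × ℤ → PS := fun p => tt z v qq p.2 * (PP ^ 2 * (qq ^ (p.1+1) *
    (ip qq ((p.1 + 1 : ℤ) - p.2) * ip qq ((p.1 : ℤ) + p.2)))) with hG
  have hLF : LF G := by
    intro M
    refine ((Set.finite_lt_nat M).prod (Set.finite_Icc (-(M:ℤ)) M)).subset ?_
    rintro ⟨N, j⟩ hN
    have h1 : N < M := by
      by_contra hc
      apply hN
      rw [hG]
      simp only
      exact (((pow_dvd_pow qq (by omega)).mul_right _).mul_left _).mul_left _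
    refine ⟨h1, ?_⟩
    by_contra hc
    apply hN
    rw [hG]
    simp only [Set.mem_Icc, not_and_or, not_le] at hc ⊢
    rcases hc with hc | hc
    · rw [ip_neg (n := (N : ℤ) + j) (by omega)]; simp
    · rw [ip_neg (n := (N : ℤ) + 1 - j) (by omega)]; simp
  have h1 : ∀ N : ℕ, qq ^ (N+1) * (pinf (qq ^ (2*N+2)) qq * PP *
      (ppoch z qq (N+1) * ppoch v qq N)) = ∑' j : ℤ, G (N, j) := by
    intro N
    have hF : FJ z v qq (N+1) N := finJTP qq_dvd hzv _ _
    unfold FJ at hF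
    have hs := pinf_split qq_dvd qq (N + 1 + N)
    rw [show qq * qq ^ (N + 1 + N) = qq ^ (2 * N + 2) by rw [← pow_succ']; congr 1; ring] at hs
    have e : ∀ j, G (N, j) = (qq ^ (N+1) * PP ^ 2) * (tt z v qq j *
      (ip qq ((N + 1 : ℕ) - j) * ip qq ((N : ℤ) + j))) := by
      intro j; rw [hG]; simp only; push_cast; ring
    rw [tsum_congr e, ps_tsum_mul_left _ _ (lf_fj _ _ _ _), hF]
    have hs' : PP = ppoch qq qq (N + 1 + N) * pinf (qq ^ (2*N+2)) qq := hs
    linear_combination (- qq ^ (N+1) * PP * ∑' j : ℤ, (tt z v qq j *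
      (ip qq ((N + 1 : ℕ) - j) * ip qq ((N : ℤ) + j)))) * hs'
  rw [tsum_congr h1, hLF.tsum_comm]
  apply tsum_congr
  intro j
  unfold psi
  have hl0 : LF (fun N : ℕ => qq ^ (N+1) * (ip qq ((N + 1 : ℤ) - j) * ip qq ((N : ℤ) + j))) :=
    LF.of_dvd_nat (fun m => (pow_dvd_pow qq (Nat.le_succ m)).mul_right _)
  rw [← ps_tsum_mul_left _ _ hl0, ← ps_tsum_mul_left _ _ (hl0.mul_left _)]

/-- evaluation at `z = q` -/
lemma FF_q : ∑' j : ℤ, tt qq 1 qq j * psi j = qq * PP ^ 2 := by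
  rw [← FF_expand (mul_one qq), tsum_eq_single 0]
  · have := pinf_split qq_dvd qq 1
    simp only [ppoch, Finset.prod_range_one, pow_zero, mul_one, pow_one] at this
    simp [ppoch]
    have e : PP = (1 - qq) * pinf (qq ^ 2) qq := by
      unfold PP; rw [this]; congr 2; ring
    linear_combination (- PP) * e
  · intro N hN
    have : ppoch 1 qq N = 0 := by
      unfold ppoch
      apply Finset.prod_eq_zero (i := 0) (by simp; omega)
      simp
    rw [this]; simp

/-- the q-binomial theorem -/
lemma qbinom {a b : PS} (hb : qq ∣ b) :
    pinf b qq * ∑' k : ℕ, ppoch a qq k * ip qq k * b ^ k = pinf (a * b) qq := by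
  set F : PS → PS := fun b => ∑' k : ℕ, ppoch a qq k * ip qq k * b ^ k with hF
  have hl : ∀ (g : ℕ → PS) (b : PS), qq ∣ b → LF (fun k : ℕ => g k * b ^ k) :=
    fun g b hb => LF.of_dvd_nat (fun k => (pow_dvd_pow_of_dvd hb k).mul_left _)
  have hstep : ∀ b, qq ∣ b → (1 - b) * F b = (1 - a * b) * F (b * qq) := by
    intro b hb
    have l1 := hl (fun k => ppoch a qq k * ip qq k) b hb
    have l2 := hl (fun k => ppoch a qq k * ip qq k) (b * qq) (hb.mul_right _)
    have e1 : F b - F (b * qq) = ∑' k : ℕ, b * (ppoch a qq k * ip qq k * b ^ k -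
        a * (ppoch a qq k * ip qq k * (b * qq) ^ k)) := by
      rw [hF]
      simp only
      rw [← LF.tsum_sub l1 l2, (l1.sub l2).summable.tsum_eq_zero_add]
      simp only [pow_zero, sub_self, zero_add]
      apply tsum_congr
      intro k
      have r := ip_rec qq_dvd (n := ((k+1 : ℕ) : ℤ)) (by omega)
      rw [show (((k + 1 : ℕ) : ℤ)) - 1 = ((k : ℕ) : ℤ) by push_cast; ring, Int.toNat_natCast] at r
      rw [r, ppoch_succ]
      ring
    have e2 : F b - F (b * qq) = b * (F b - a * F (b * qq)) := by
      rw [e1, ps_tsum_mul_left _ _ (l1.sub (l2.mul_left _)), LF.tsum_sub l1 (l2.mul_left _),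
        ps_tsum_mul_left _ _ l2]
    linear_combination e2
  have hiter : ∀ n : ℕ, ppoch b qq n * F b = ppoch (a * b) qq n * F (b * qq ^ n) := by
    intro n
    induction n with
    | zero => simp
    | succ n ih =>
      have h1 := hstep (b * qq ^ n) (hb.mul_right _)
      rw [ppoch_succ, ppoch_succ, pow_succ, ← mul_assoc b]
      linear_combination (1 - b * qq ^ n) * ih + ppoch (a * b) qq n * h1
  apply ps_ext_dvd
  intro N
  have d1 := (pinf_dvd' qq_dvd b N).mul_right (F b)
  have d2 := pinf_dvd' qq_dvd (a * b) N
  have d3 : qq ^ N ∣ F (b * qq ^ N) - 1 := by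
    have l2 := hl (fun k => ppoch a qq k * ip qq k) (b * qq ^ N) (hb.mul_right _)
    rw [hF]
    simp only
    rw [l2.summable.tsum_eq_zero_add]
    have i0 := pp_mul_ip qq_dvd 0
    simp only [ppoch_zero, one_mul, Nat.cast_zero] at i0
    simp only [ppoch_zero, Nat.cast_zero, i0, one_mul, pow_zero, add_sub_cancel_left]
    apply LF.dvd_tsum
    · exact l2.comp (e := fun k => k + 1) (add_left_injective 1)
    · intro k
      rw [pow_succ]
      exact ((Dvd.intro_left _ rfl : qq ^ N ∣ b * qq ^ N).mul_left _).mul_left _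
  have d4 := d3.mul_left (ppoch (a * b) qq N)
  have := dvd_sub (dvd_add d1 d4) d2
  convert this using 1
  have := hiter N
  have hFb : F b = ∑' k : ℕ, ppoch a qq k * ip qq k * b ^ k := rfl
  rw [← hFb]
  linear_combination this

lemma LF.tsum_fiber_eq {ι κ : Type*} [DecidableEq κ] {f : ι → PS} (h : LF f) (c : ι → κ) :
    ∑' i, f i = ∑' k, ∑' i, (if c i = k then f i else 0) := by
  have hl : LF (fun p : κ × ι => if c p.2 = p.1 then f p.2 else 0) := by
    intro N
    refine ((h N).image (fun i => (c i, i))).subset ?_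
    rintro ⟨k, i⟩ hk
    simp only [Set.mem_ofPred_eq] at hk
    by_cases hc : c i = k
    · rw [if_pos hc] at hk
      exact ⟨i, hk, by simp [hc]⟩
    · rw [if_neg hc] at hk
      exact absurd (dvd_zero _) hk
  rw [hl.tsum_comm]
  apply tsum_congr
  intro i
  rw [tsum_eq_single (c i)]
  · simp
  · intro k hk
    simp [Ne.symm hk]

lemma finite_partitions (N : ℕ) : {μ : Multiset ℕ | IsPartition μ ∧ μ.sum < N}.Finite := by
  have : {μ : Multiset ℕ | IsPartition μ ∧ μ.sum < N} ⊆
      ⋃ m ∈ Finset.range N, Set.range (fun p : Nat.Partition m => p.parts) := by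
    rintro μ ⟨h1, h2⟩
    simp only [Finset.mem_range, Set.mem_iUnion]
    exact ⟨μ.sum, h2, ⟨μ, fun hi => h1 _ hi, rfl⟩, rfl⟩
  refine Set.Finite.subset ?_ this
  exact Set.Finite.biUnion (Finset.finite_toSet _) (fun m _ => Set.finite_range _)

lemma LF.of_partition {f : Multiset ℕ → PS} (h0 : ∀ μ, ¬ IsPartition μ → f μ = 0)
    (h : ∀ μ, qq ^ μ.sum ∣ f μ) : LF f := by
  intro N
  refine (finite_partitions N).subset ?_
  intro μ hμ
  constructor
  · by_contra hc
    apply hμ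
    rw [h0 μ hc]
    exact dvd_zero _
  · by_contra hc
    exact hμ ((pow_dvd_pow _ (not_lt.1 hc)).trans (h μ))

lemma LF.of_partition2 {f : Multiset ℕ × Multiset ℕ → PS}
    (h0 : ∀ p, ¬ (IsPartition p.1 ∧ IsPartition p.2) → f p = 0)
    (h : ∀ p, qq ^ (p.1.sum + p.2.sum) ∣ f p) : LF f := by
  intro N
  refine ((finite_partitions N).prod (finite_partitions N)).subset ?_
  intro p hp
  have h1 : IsPartition p.1 ∧ IsPartition p.2 := by
    by_contra hc
    apply hp
    rw [h0 p hc]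
    exact dvd_zero _
  have h2 : p.1.sum + p.2.sum < N := by
    by_contra hc
    exact hp ((pow_dvd_pow _ (not_lt.1 hc)).trans (h p))
  exact ⟨⟨h1.1, by omega⟩, ⟨h1.2, by omega⟩⟩

lemma dvd_map_prod {u : ℕ → PS} (hu : ∀ i, qq ^ i ∣ u i) (μ : Multiset ℕ) :
    qq ^ μ.sum ∣ (μ.map u).prod := by
  induction μ using Multiset.induction_on with
  | empty => simp
  | cons a μ ih =>
    simp only [Multiset.sum_cons, Multiset.map_cons, Multiset.prod_cons, pow_add]
    exact mul_dvd_mul (hu a) ih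

open Classical in
/-- generating function for partitions with all parts at least `a` -/
def WW (u : ℕ → PS) (a : ℕ) : PS :=
  ∑' μ : Multiset ℕ, if ∀ x ∈ μ, a ≤ x then (μ.map u).prod else 0

open Classical in
lemma lf_WW {u : ℕ → PS} (hu : ∀ i, qq ^ i ∣ u i) {a : ℕ} (ha : 0 < a) :
    LF (fun μ : Multiset ℕ => if ∀ x ∈ μ, a ≤ x then (μ.map u).prod else 0) := by
  apply LF.of_partition
  · intro μ hμ
    rw [if_neg]
    intro hc
    exact hμ (fun x hx => lt_of_lt_of_le ha (hc x hx))
  · intro μ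
    split_ifs
    · exact dvd_map_prod hu μ
    · exact dvd_zero _

open Classical in
lemma tsum_cons {f : Multiset ℕ → PS} (a : ℕ) (h : ∀ μ, a ∉ μ → f μ = 0) :
    ∑' μ, f μ = ∑' μ, f (a ::ₘ μ) := by
  symm
  apply Function.Injective.tsum_eq (g := fun μ => a ::ₘ μ) (f := f)
  · intro s t hst
    exact (Multiset.cons_inj_right a).1 hst
  · intro μ hμ
    by_cases hc : a ∈ μ
    · obtain ⟨t, rfl⟩ := Multiset.exists_cons_of_mem hc
      exact ⟨t, rfl⟩
    · exact absurd (h μ hc) hμ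

lemma WW_rec {u : ℕ → PS} (hu : ∀ i, qq ^ i ∣ u i) {a : ℕ} (ha : 0 < a) :
    (1 - u a) * WW u a = WW u (a+1) := by
  classical
  have l1 := lf_WW hu ha
  have l2 := lf_WW hu (Nat.succ_pos a)
  have : WW u a - WW u (a+1) = u a * WW u a := by
    unfold WW
    rw [← LF.tsum_sub l1 l2, tsum_cons a, ← ps_tsum_mul_left _ _ l1]
    · apply tsum_congr
      intro μ
      rw [if_neg (c := ∀ x ∈ a ::ₘ μ, a + 1 ≤ x) (by intro h; have := h a (by simp); omega)]
      by_cases hc : ∀ x ∈ μ, a ≤ x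
      · rw [if_pos hc, if_pos (by simpa using hc)]
        simp
      · rw [if_neg hc, if_neg (by simpa using hc)]
        simp
    · intro μ hμ
      have : (∀ x ∈ μ, a ≤ x) ↔ (∀ x ∈ μ, a + 1 ≤ x) := by
        constructor
        · intro h x hx
          have := h x hx
          have : x ≠ a := by rintro rfl; exact hμ hx
          omega
        · intro h x hx
          have := h x hx
          omega
      simp only [this, sub_self]
  linear_combination this

lemma WW_dvd {u : ℕ → PS} (hu : ∀ i, qq ^ i ∣ u i) {a : ℕ} (ha : 0 < a) :
    qq ^ a ∣ WW u a - 1 := by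
  classical
  have l1 := lf_WW hu ha
  have e : WW u a - 1 = ∑' μ : Multiset ℕ, if μ = 0 then 0 else
      if ∀ x ∈ μ, a ≤ x then (μ.map u).prod else 0 := by
    unfold WW
    rw [l1.summable.tsum_eq_add_tsum_ite 0]
    simp
  rw [e]
  apply LF.dvd_tsum
  · apply l1.mono
    intro μ
    by_cases h : μ = 0 <;> simp [h]
  · intro μ
    split_ifs with h1 h2
    · exact dvd_zero _
    · refine dvd_trans (pow_dvd_pow _ ?_) (dvd_map_prod hu μ)
      obtain ⟨x, hx⟩ := Multiset.exists_mem_of_ne_zero h1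
      exact (h2 x hx).trans (Multiset.le_sum_of_mem hx)
    · exact dvd_zero _

open Classical in
/-- generating function for multisets with `k` parts in `[n, n+m)` -/
def HH (n m k : ℕ) : PS :=
  ∑' ν : Multiset ℕ, if Multiset.card ν = k ∧ ∀ x ∈ ν, n ≤ x ∧ x < n + m then qq ^ ν.sum else 0

open Classical in
lemma lf_HH {n : ℕ} (hn : 0 < n) (m k : ℕ) :
    LF (fun ν : Multiset ℕ =>
      if Multiset.card ν = k ∧ ∀ x ∈ ν, n ≤ x ∧ x < n + m then qq ^ ν.sum else 0) := by
  apply LF.of_partition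
  · intro μ hμ
    rw [if_neg]
    intro hc
    exact hμ (fun x hx => lt_of_lt_of_le hn (hc.2 x hx).1)
  · intro μ
    split_ifs
    · exact dvd_rfl
    · exact dvd_zero _

lemma HH_rec {n : ℕ} (hn : 0 < n) (m k : ℕ) :
    HH n (m+1) (k+1) = HH n m (k+1) + qq ^ (n+m) * HH n (m+1) k := by
  classical
  have : HH n (m+1) (k+1) - HH n m (k+1) = qq ^ (n+m) * HH n (m+1) k := by
    unfold HH
    rw [← LF.tsum_sub (lf_HH hn _ _) (lf_HH hn _ _), tsum_cons (n+m),
      ← ps_tsum_mul_left _ _ (lf_HH hn _ _)]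
    · apply tsum_congr
      intro μ
      rw [if_neg (c := Multiset.card ((n+m) ::ₘ μ) = k + 1 ∧
        ∀ x ∈ (n+m) ::ₘ μ, n ≤ x ∧ x < n + m) (by
          rintro ⟨_, h⟩; have := h (n+m) (by simp); omega)]
      by_cases hc : Multiset.card μ = k ∧ ∀ x ∈ μ, n ≤ x ∧ x < n + (m+1)
      · rw [if_pos hc, if_pos (by simpa using hc)]
        simp [pow_add]
      · rw [if_neg hc, if_neg (by simpa using hc)]
        simp
    · intro μ hμ
      have : (∀ x ∈ μ, n ≤ x ∧ x < n + (m+1)) ↔ (∀ x ∈ μ, n ≤ x ∧ x < n + m) := by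
        constructor
        · intro h x hx
          have := h x hx
          have : x ≠ n + m := by rintro rfl; exact hμ hx
          omega
        · intro h x hx
          have := h x hx
          omega
      simp only [this, sub_self]
  linear_combination this

lemma HH_zero_right (n m : ℕ) : HH n m 0 = 1 := by
  unfold HH
  rw [tsum_eq_single 0]
  · simp
  · intro μ hμ
    simp [hμ]

lemma HH_zero_left (n k : ℕ) : HH n 0 (k+1) = 0 := by
  unfold HH
  convert tsum_zero with μ
  rw [if_neg]
  rintro ⟨h1, h2⟩
  obtain ⟨x, hx⟩ := Multiset.card_pos_iff_exists_mem.1 (by omega : 0 < Multiset.card μ)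
  have := h2 x hx
  omega

lemma HH_eval {n : ℕ} (hn : 0 < n) (m k : ℕ) :
    HH n m k * ppoch qq qq k = qq ^ (n*k) * ppoch (qq ^ m) qq k := by
  induction m generalizing k with
  | zero =>
    cases k with
    | zero => simp [HH_zero_right]
    | succ k =>
      rw [HH_zero_left]
      have : ppoch (qq ^ 0) qq (k+1) = 0 := by
        unfold ppoch
        apply Finset.prod_eq_zero (i := 0) (by simp)
        simp
      rw [this]; simp
  | succ m ihm =>
    induction k with
    | zero => simp [HH_zero_right]
    | succ k ihk =>
      have h1 := ihm (k+1)
      have h2 := ppoch_add (q := qq) (qq ^ m) 1 k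
      rw [add_comm 1 k] at h2
      have h3 : ppoch (qq ^ m) qq 1 = 1 - qq ^ m := by simp [ppoch]
      rw [h3, pow_one, ← pow_succ] at h2
      rw [HH_rec hn]
      rw [h2] at h1
      have e1 := ppoch_succ (q := qq) qq k
      have e2 := ppoch_succ (q := qq) (qq ^ (m+1)) k
      rw [e1] at h1 ⊢
      rw [e2]
      rw [show n * (k+1) = n * k + n by ring, pow_add] at h1 ⊢
      linear_combination h1 + (qq ^ (n+m) * (1 - qq * qq ^ k)) * ihk

/-- weights -/
def uw (z : ℂ) (b : ℕ) (i : ℕ) : PS :=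
  if i < b then qq ^ i else PowerSeries.C z * qq ^ i

lemma uw_dvd (z : ℂ) (b i : ℕ) : qq ^ i ∣ uw z b i := by
  unfold uw
  split_ifs
  · exact dvd_rfl
  · exact Dvd.intro_left _ rfl

lemma WW_uw_large (z : ℂ) (b a : ℕ) (ha : 0 < a) (hab : b ≤ a) :
    pinf (PowerSeries.C z * qq ^ a) qq * WW (uw z b) a = 1 := by
  have hconst : ∀ N, pinf (PowerSeries.C z * qq ^ a) qq * WW (uw z b) a =
      pinf (PowerSeries.C z * qq ^ (a + N)) qq * WW (uw z b) (a + N) := by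
    intro N
    induction N with
    | zero => rfl
    | succ N ih =>
      rw [ih, pinf_step qq_dvd, ← add_assoc, ← WW_rec (uw_dvd z b) (by omega : 0 < a + N)]
      have : uw z b (a+N) = PowerSeries.C z * qq ^ (a+N) := by
        unfold uw; rw [if_neg (by omega)]
      rw [this, mul_assoc (PowerSeries.C z), ← pow_succ]
      ring
  apply ps_ext_dvd
  intro N
  rw [hconst N]
  have h1 : qq ^ N ∣ pinf (PowerSeries.C z * qq ^ (a + N)) qq - 1 := by
    apply pinf_dvd_one qq_dvd
    exact (pow_dvd_pow _ (by omega)).mul_left _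
  have h2 : qq ^ N ∣ WW (uw z b) (a + N) - 1 :=
    (pow_dvd_pow _ (by omega)).trans (WW_dvd (uw_dvd z b) (by omega))
  simpa using dvd_mul_sub_mul' h1 h2

lemma WW_uw_small (z : ℂ) {n : ℕ} (hn : 0 < n) (b k : ℕ) (hk : n + k ≤ b) :
    ppoch (qq ^ n) qq k * WW (uw z b) n = WW (uw z b) (n + k) := by
  induction k with
  | zero => simp
  | succ k ih =>
    rw [ppoch_succ, ← add_assoc, ← WW_rec (uw_dvd z b) (by omega : 0 < n + k), ← ih (by omega)]
    have : uw z b (n+k) = qq ^ (n+k) := by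
      unfold uw; rw [if_pos (by omega)]
    rw [this, pow_add]
    ring

lemma HW {z : ℂ} {n : ℕ} (hn : 0 < n) (k : ℕ) :
    pinf (PowerSeries.C z * qq ^ n) qq * (HH n n k * WW (uw z (n+k)) n) =
      qq ^ (n*k) * (ppoch (PowerSeries.C z * qq ^ n) qq k * ip qq k) := by
  have h1 := WW_uw_small z hn (n+k) k le_rfl
  have h2 := WW_uw_large z (n+k) (n+k) (by omega) le_rfl
  have h3 := HH_eval hn n k
  have h4 := pp_mul_ip qq_dvd k
  have h5 := pinf_split qq_dvd (PowerSeries.C z * qq ^ n) k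
  rw [mul_assoc, ← pow_add] at h5
  rw [← h1] at h2
  set A := ppoch (PowerSeries.C z * qq ^ n) qq k
  set B := pinf (PowerSeries.C z * qq ^ (n + k)) qq
  set W := WW (uw z (n + k)) n
  rw [h5]
  linear_combination (-A * B * W * HH n n k) * h4 + (A * B * W * ip qq k) * h3
    + A * ip qq k * qq ^ (n * k) * h2

lemma HH_dvd {n : ℕ} (hn : 0 < n) (k : ℕ) : qq ^ k ∣ HH n n k := by
  have h3 := HH_eval hn n k
  have h4 := pp_mul_ip qq_dvd k
  have : HH n n k = qq ^ (n * k) * (ppoch (qq ^ n) qq k * ip qq k) := by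
    linear_combination ip qq k * h3 - HH n n k * h4
  rw [this]
  exact Dvd.dvd.mul_right (pow_dvd_pow _ (Nat.le_mul_of_pos_left k hn)) _

lemma C_mul_C_inv {z : ℂ} (hz : z ≠ 0) : PowerSeries.C z * PowerSeries.C z⁻¹ = (1 : PS) := by
  rw [← map_mul, mul_inv_cancel₀ hz, map_one]

lemma Tn_eval {z : ℂ} (hz : z ≠ 0) {n : ℕ} (hn : 0 < n) :
    pinf (PowerSeries.C z * qq ^ n) qq * pinf (PowerSeries.C z⁻¹ * qq ^ n) qq *
      (∑' k : ℕ, PowerSeries.C (z⁻¹ ^ k) * (HH n n k * WW (uw z (n+k)) n)) =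
      pinf (qq ^ (2 * n)) qq := by
  have hb : qq ∣ PowerSeries.C z⁻¹ * qq ^ n := (dvd_pow_self _ (by omega)).mul_left _
  have h := qbinom (a := PowerSeries.C z * qq ^ n) hb
  have e : PowerSeries.C z * qq ^ n * (PowerSeries.C z⁻¹ * qq ^ n) = qq ^ (2 * n) := by
    rw [mul_mul_mul_comm, C_mul_C_inv hz, one_mul, ← pow_add, two_mul]
  rw [e] at h
  rw [← h, mul_comm (pinf (PowerSeries.C z * qq ^ n) qq), mul_assoc]
  refine congrArg (fun y => pinf (PowerSeries.C z⁻¹ * qq ^ n) qq * y) ?_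
  rw [← ps_tsum_mul_left]
  · apply tsum_congr
    intro k
    rw [mul_left_comm, HW hn k, mul_pow, ← map_pow, ← pow_mul, mul_comm (qq ^ (n*k))]
    exact mul_left_comm _ _ _
  · apply LF.of_dvd_nat
    intro k
    exact ((HH_dvd hn k).mul_right _).mul_left _

lemma sPart_def' (μ : Multiset ℕ) : sPart μ = (μ.map (fun x : ℕ => (x : ℕ∞))).inf := by
  unfold sPart
  simp [Multiset.bind_def, Multiset.pure_def, Multiset.bind_singleton]

lemma sPart_eq {μ : Multiset ℕ} {m : ℕ} (hm : m ∈ μ) (h : ∀ x ∈ μ, m ≤ x) : sPart μ = m := by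
  rw [sPart_def']
  apply le_antisymm
  · exact Multiset.inf_le (Multiset.mem_map_of_mem _ hm)
  · rw [Multiset.le_inf]
    intro b hb
    obtain ⟨x, hx, rfl⟩ := Multiset.mem_map.1 hb
    exact_mod_cast h x hx

lemma exists_min_part {μ : Multiset ℕ} (h : μ ≠ 0) : ∃ m ∈ μ, ∀ x ∈ μ, m ≤ x := by
  obtain ⟨x, hx⟩ := Multiset.exists_mem_of_ne_zero h
  have hne : μ.toFinset.Nonempty := ⟨x, by simpa using hx⟩
  refine ⟨μ.toFinset.min' hne, ?_, ?_⟩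
  · simpa using Finset.min'_mem _ hne
  · intro y hy
    exact Finset.min'_le _ _ (by simpa using hy)

lemma inST_iff {μ ν : Multiset ℕ} {m : ℕ} (hm : m ∈ μ) (h : ∀ x ∈ μ, m ≤ x) :
    InST (μ, ν) ↔ 0 < m ∧ ∀ x ∈ ν, m ≤ x ∧ x < m + m := by
  unfold InST
  simp only [sPart_eq hm h]
  constructor
  · rintro ⟨h1, h2, h3, h4, h5⟩
    refine ⟨h1 m hm, fun x hx => ⟨?_, ?_⟩⟩
    · have : sPart ν ≤ x := by
        rw [sPart_def']
        exact Multiset.inf_le (Multiset.mem_map_of_mem _ hx)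
      exact_mod_cast h4.trans this
    · have h6 : lPart ν < 2 * m := by exact_mod_cast h5
      have : x ≤ lPart ν := Multiset.le_sup hx
      omega
  · rintro ⟨h1, h2⟩
    refine ⟨fun x hx => lt_of_lt_of_le h1 (h x hx), fun x hx => lt_of_lt_of_le h1 (h2 x hx).1, ?_,
      ?_, ?_⟩
    · rintro rfl; simp at hm
    · rw [sPart_def']
      rw [Multiset.le_inf]
      intro b hb
      obtain ⟨x, hx, rfl⟩ := Multiset.mem_map.1 hb
      exact_mod_cast (h2 x hx).1
    · have : lPart ν ≤ 2 * m - 1 := by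
        unfold lPart
        rw [Multiset.sup_le]
        intro x hx
        have := (h2 x hx).2
        omega
      have : lPart ν < 2 * m := by omega
      exact_mod_cast this

lemma paircrank_cons {μ ν : Multiset ℕ} {n : ℕ} (h : ∀ x ∈ μ, n ≤ x) :
    paircrank (n ::ₘ μ, ν) =
      (Multiset.countP (fun x => n + Multiset.card ν ≤ x) μ : ℤ) - Multiset.card ν := by
  have hs : sPart (n ::ₘ μ) = n := sPart_eq (by simp) (by simpa using h)
  unfold paircrank
  simp only [hs]
  by_cases hν : ν = 0
  · subst hν
    simp only [Multiset.card_cons, Multiset.card_zero, add_zero, if_true]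
    rw [Multiset.countP_eq_card.2 h]
    push_cast
    ring
  · rw [if_neg hν]
    have hc : 0 < Multiset.card ν := Multiset.card_pos.2 hν
    rw [Multiset.countP_cons_of_neg]
    · simp only [ENat.toNat_natCast]
      congr!
    · simp; omega

lemma map_uw_prod (z : ℂ) (b : ℕ) (μ : Multiset ℕ) : (μ.map (uw z b)).prod =
    PowerSeries.C (z ^ Multiset.countP (fun x => b ≤ x) μ) * qq ^ μ.sum := by
  induction μ using Multiset.induction_on with
  | empty => simp
  | cons a μ ih =>
    rw [Multiset.map_cons, Multiset.prod_cons, ih, Multiset.sum_cons, uw]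
    by_cases h : a < b
    · rw [if_pos h, Multiset.countP_cons_of_neg _ (by omega), pow_add]
      ring
    · rw [if_neg h, Multiset.countP_cons_of_pos _ (by omega), pow_add, pow_succ z, map_mul]
      ring

open Classical in
/-- term of the generating function -/
def tm (z : ℂ) (p : Multiset ℕ × Multiset ℕ) : PS :=
  if InST p then PowerSeries.C (z ^ paircrank p) * qq ^ (p.1.sum + p.2.sum) else 0

lemma lf_tm (z : ℂ) : LF (tm z) := by
  apply LF.of_partition2
  · intro p hp
    unfold tm
    rw [if_neg]
    intro h
    exact hp ⟨h.1, h.2.1⟩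
  · intro p
    unfold tm
    split_ifs
    · exact Dvd.intro_left _ rfl
    · exact dvd_zero _

/-- the generating function -/
def SS (z : ℂ) : PS := ∑' p, tm z p

open Classical in
lemma tm_cons {z : ℂ} (hz : z ≠ 0) {n : ℕ} (hn : 0 < n) (μ ν : Multiset ℕ) :
    (if (sPart (n ::ₘ μ)).toNat = n then tm z (n ::ₘ μ, ν) else 0) =
    (qq ^ n * (if ∀ x ∈ ν, n ≤ x ∧ x < n + n then
        PowerSeries.C (z⁻¹ ^ Multiset.card ν) * qq ^ ν.sum else 0)) *
      (if ∀ x ∈ μ, n ≤ x then (μ.map (uw z (n + Multiset.card ν))).prod else 0) := by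
  by_cases hμ : ∀ x ∈ μ, n ≤ x
  · have h' : ∀ x ∈ n ::ₘ μ, n ≤ x := by simpa using hμ
    have hs : sPart (n ::ₘ μ) = n := sPart_eq (by simp) h'
    rw [if_pos hμ, hs, if_pos (by simp)]
    unfold tm
    rw [inST_iff (by simp) h']
    by_cases hν : ∀ x ∈ ν, n ≤ x ∧ x < n + n
    · rw [if_pos ⟨hn, hν⟩, if_pos hν, paircrank_cons hμ, map_uw_prod, Multiset.sum_cons,
        zpow_sub₀ hz, zpow_natCast, zpow_natCast, div_eq_mul_inv, ← inv_pow, map_mul]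
      simp only [pow_add]
      ring
    · rw [if_neg hν, if_neg (fun h => hν h.2)]
      simp
  · rw [if_neg hμ, mul_zero, if_neg]
    intro h
    apply hμ
    obtain ⟨m, hm, hmin⟩ := exists_min_part (Multiset.cons_ne_zero (a := n) (m := μ))
    rw [sPart_eq hm hmin] at h
    simp only [ENat.toNat_natCast] at h
    subst h
    intro x hx
    exact hmin x (by simp [hx])

open Classical in
lemma fiber_eval {z : ℂ} (hz : z ≠ 0) {n : ℕ} (hn : 0 < n) :
    ∑' p : Multiset ℕ × Multiset ℕ, (if (sPart p.1).toNat = n then tm z p else 0) =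
    qq ^ n * ∑' k : ℕ, PowerSeries.C (z⁻¹ ^ k) * (HH n n k * WW (uw z (n+k)) n) := by
  have hl : LF (fun p : Multiset ℕ × Multiset ℕ =>
      (if (sPart p.1).toNat = n then tm z p else 0)) := by
    apply (lf_tm z).mono
    intro p
    split_ifs
    · exact dvd_rfl
    · exact dvd_zero _
  have hinj : Function.Injective (fun p : Multiset ℕ × Multiset ℕ => (n ::ₘ p.2, p.1)) := by
    rintro ⟨a, b⟩ ⟨c, d⟩ h
    simp only [Prod.mk.injEq, Multiset.cons_inj_right] at h
    exact Prod.ext h.2 h.1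
  have hl2 := hl.comp hinj
  have e : ∑' p : Multiset ℕ × Multiset ℕ, (if (sPart p.1).toNat = n then tm z p else 0) =
      ∑' p : Multiset ℕ × Multiset ℕ, (if (sPart (n ::ₘ p.2)).toNat = n then
        tm z (n ::ₘ p.2, p.1) else 0) := by
    symm
    apply hinj.tsum_eq (f := fun p : Multiset ℕ × Multiset ℕ =>
      (if (sPart p.1).toNat = n then tm z p else 0))
    rintro ⟨a, b⟩ hp
    rw [Function.mem_support] at hp
    have h1 : (sPart a).toNat = n := by
      by_contra hc
      simp [hc] at hp
    have h2 : InST (a, b) := by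
      by_contra hc
      simp [tm, hc] at hp
    obtain ⟨m, hm, hmin⟩ := exists_min_part h2.2.2.1
    rw [sPart_eq hm hmin] at h1
    simp only [ENat.toNat_natCast] at h1
    subst h1
    obtain ⟨t, ht⟩ := Multiset.exists_cons_of_mem hm
    exact ⟨(b, t), by simp [← ht]⟩
  rw [e]
  rw [hl2.tsum_prod]
  simp only [tm_cons hz hn] at hl2 ⊢
  have e2 : ∀ ν : Multiset ℕ, ∑' μ : Multiset ℕ,
      (qq ^ n * (if ∀ x ∈ ν, n ≤ x ∧ x < n + n then
        PowerSeries.C (z⁻¹ ^ Multiset.card ν) * qq ^ ν.sum else 0)) *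
      (if ∀ x ∈ μ, n ≤ x then (μ.map (uw z (n + Multiset.card ν))).prod else 0) =
      (qq ^ n * (if ∀ x ∈ ν, n ≤ x ∧ x < n + n then
        PowerSeries.C (z⁻¹ ^ Multiset.card ν) * qq ^ ν.sum else 0)) *
        WW (uw z (n + Multiset.card ν)) n := by
    intro ν
    rw [ps_tsum_mul_left _ _ (lf_WW (uw_dvd _ _) hn)]
    rfl
  have hl3 := hl2.tsum_fiber_dvd
  simp only [e2] at hl3 ⊢
  rw [hl3.tsum_fiber_eq (fun ν => Multiset.card ν), ← ps_tsum_mul_left]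
  · apply tsum_congr
    intro k
    have : ∀ ν : Multiset ℕ, (if Multiset.card ν = k then
        qq ^ n * (if ∀ x ∈ ν, n ≤ x ∧ x < n + n then
        PowerSeries.C (z⁻¹ ^ Multiset.card ν) * qq ^ ν.sum else 0) *
        WW (uw z (n + Multiset.card ν)) n else 0) =
        (qq ^ n * PowerSeries.C (z⁻¹ ^ k) * WW (uw z (n + k)) n) *
        (if Multiset.card ν = k ∧ ∀ x ∈ ν, n ≤ x ∧ x < n + n then qq ^ ν.sum else 0) := by
      intro ν
      by_cases h1 : Multiset.card ν = k
      · by_cases h2 : ∀ x ∈ ν, n ≤ x ∧ x < n + n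
        · rw [if_pos h1, if_pos h2, if_pos ⟨h1, h2⟩, h1]
          ring
        · rw [if_pos h1, if_neg h2, if_neg (fun h => h2 h.2)]
          ring
      · rw [if_neg h1, if_neg (fun h => h1 h.1), mul_zero]
    rw [tsum_congr this, ps_tsum_mul_left _ _ (lf_HH hn _ _)]
    change _ * HH n n k = _
    ring
  · apply LF.of_dvd_nat
    intro k
    exact ((HH_dvd hn k).mul_right _).mul_left _

/-- the theta function `j(z;q)` -/
def jj (z : ℂ) : PS := ∑' n : ℤ, tt (PowerSeries.C z) (PowerSeries.C z⁻¹ * qq) qq n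

/-- numerator -/
def ff (z : ℂ) : PS := ∑' n : ℤ, tt (PowerSeries.C z) (PowerSeries.C z⁻¹ * qq) qq n * psi n

lemma zv {z : ℂ} (hz : z ≠ 0) : PowerSeries.C z * (PowerSeries.C z⁻¹ * qq) = qq := by
  rw [← mul_assoc, C_mul_C_inv hz, one_mul]

theorem SS_mul_jj {z : ℂ} (hz : z ≠ 0) : SS z * jj z = ff z := by
  classical
  unfold jj ff
  rw [← JTP qq_dvd (zv hz), ← FF_expand (zv hz)]
  set cz : PS := PowerSeries.C z with hcz
  set cw : PS := PowerSeries.C z⁻¹ with hcw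
  have h1 : SS z = ∑' n : ℕ, ∑' p : Multiset ℕ × Multiset ℕ,
      (if (sPart p.1).toNat = n then tm z p else 0) := (lf_tm z).tsum_fiber_eq _
  have h0 : ∑' p : Multiset ℕ × Multiset ℕ, (if (sPart p.1).toNat = 0 then tm z p else 0) = 0 := by
    convert tsum_zero with p
    split_ifs with h
    · unfold tm
      rw [if_neg]
      intro hp
      obtain ⟨m, hm, hmin⟩ := exists_min_part hp.2.2.1
      rw [sPart_eq hm hmin] at h
      simp only [ENat.toNat_natCast] at h
      have := hp.1 m hm
      omega
    · rfl
  have hl : LF (fun n : ℕ => qq ^ n *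
      ∑' k : ℕ, PowerSeries.C (z⁻¹ ^ k) * (HH n n k * WW (uw z (n+k)) n)) :=
    LF.of_dvd_nat (fun n => Dvd.intro _ rfl)
  have h2 : SS z = ∑' N : ℕ, qq ^ (N+1) *
      ∑' k : ℕ, PowerSeries.C (z⁻¹ ^ k) * (HH (N+1) (N+1) k * WW (uw z (N+1+k)) (N+1)) := by
    have hl' : LF (fun n : ℕ => ∑' p : Multiset ℕ × Multiset ℕ,
      (if (sPart p.1).toNat = n then tm z p else 0)) := by
      apply hl.mono
      intro n
      rcases Nat.eq_zero_or_pos n with rfl | hn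
      · rw [h0]; exact dvd_zero _
      · rw [fiber_eval hz hn]
    rw [h1, hl'.summable.tsum_eq_zero_add, h0, zero_add]
    apply tsum_congr
    intro N
    exact fiber_eval hz (Nat.succ_pos N)
  rw [h2, ← ps_tsum_mul_right _ _ (hl.comp (add_left_injective 1))]
  apply tsum_congr
  intro N
  have hT := Tn_eval hz (Nat.succ_pos N)
  rw [← hcz, ← hcw] at hT
  generalize (∑' k : ℕ, PowerSeries.C (z⁻¹ ^ k) * (HH (N+1) (N+1) k * WW (uw z (N+1+k)) (N+1)))
    = T at hT ⊢
  rw [pinf_split qq_dvd cz (N+1), pinf_split qq_dvd (cw * qq) N]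
  rw [show cw * qq * qq ^ N = cw * qq ^ (N+1) by rw [pow_succ']; ring]
  rw [show 2 * N.succ = 2 * N + 2 by rfl] at hT
  rw [← hT]
  unfold PP
  simp only [Nat.succ_eq_add_one]
  ring

lemma finite_ST (M : ℕ) : {p : Multiset ℕ × Multiset ℕ | InST p ∧ p.1.sum + p.2.sum = M}.Finite := by
  refine ((finite_partitions (M+1)).prod (finite_partitions (M+1))).subset ?_
  rintro p ⟨h1, h2⟩
  exact ⟨⟨h1.1, by omega⟩, ⟨h1.2.1, by omega⟩⟩

lemma coeff_SS (z : ℂ) (M : ℕ) :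
    PowerSeries.coeff M (SS z) = ∑ p ∈ (finite_ST M).toFinset, z ^ paircrank p := by
  classical
  unfold SS
  rw [(lf_tm z).coeff_tsum_eq_sum M (finite_ST M).toFinset]
  · apply Finset.sum_congr rfl
    intro p hp
    rw [Set.Finite.mem_toFinset] at hp
    unfold tm
    rw [if_pos hp.1, hp.2]
    simp
  · intro p hp
    rw [Set.Finite.mem_toFinset] at hp
    unfold tm
    split_ifs with h
    · have : M ≠ p.1.sum + p.2.sum := fun h' => hp ⟨h, h'.symm⟩
      rw [PowerSeries.coeff_C_mul, PowerSeries.coeff_X_pow, if_neg this, mul_zero]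
    · simp

lemma counts_eq {m : ℕ} (hp : (m+1).Prime) {ζ : ℂ} (hζ : IsPrimitiveRoot ζ (m+1)) (M : ℕ)
    (h : PowerSeries.coeff M (SS ζ) = 0) (i j : ZMod (m+1)) :
    {p : Multiset ℕ × Multiset ℕ | InST p ∧ p.1.sum + p.2.sum = M ∧
        ((paircrank p : ZMod (m+1)) = i)}.ncard =
    {p : Multiset ℕ × Multiset ℕ | InST p ∧ p.1.sum + p.2.sum = M ∧
        ((paircrank p : ZMod (m+1)) = j)}.ncard := by
  classical
  set F := (finite_ST M).toFinset with hF
  set c : ZMod (m+1) → ℤ := fun i => ({p : Multiset ℕ × Multiset ℕ | InST p ∧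
    p.1.sum + p.2.sum = M ∧ ((paircrank p : ZMod (m+1)) = i)}.ncard : ℤ) with hcdef
  have hc : ∀ i : ZMod (m+1), c i =
        ((F.filter (fun p => (paircrank p : ZMod (m+1)) = i)).card : ℤ) := by
    intro i
    rw [hcdef]
    simp only
    rw [← Set.ncard_coe_finset]
    congr 2
    ext p
    simp [hF, and_assoc]
  rw [coeff_SS] at h
  have hpow : ∀ p ∈ F, ζ ^ paircrank p = ζ ^ ((paircrank p : ZMod (m+1)).val) := by
    intro p _
    rw [← zpow_natCast]
    rw [ZMod.val_intCast]
    have h1 : ζ ^ (((m+1 : ℕ) : ℤ)) = 1 := by rw [zpow_natCast, hζ.pow_eq_one]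
    have hz : ζ ≠ 0 := hζ.ne_zero (Nat.succ_ne_zero m)
    conv_lhs => rw [← Int.emod_add_mul_ediv (paircrank p) ((m+1 : ℕ) : ℤ)]
    rw [zpow_add₀ hz, zpow_mul, h1, one_zpow, mul_one]
  rw [Finset.sum_congr rfl hpow, ← Finset.sum_fiberwise F (fun p => (paircrank p : ZMod (m+1)))] at h
  have h2 : ∑ i : ZMod (m+1), (c i : ℂ) * ζ ^ i.val = 0 := by
    rw [← h]
    apply Finset.sum_congr rfl
    intro i _
    rw [hc i, Finset.sum_congr rfl (g := fun _ => ζ ^ i.val)]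
    · simp
    · intro p hp
      rw [(Finset.mem_filter.1 hp).2]
  have := (hζ.sum_eq_zero_iff_forall_eq_int hp c).1 h2 i j
  exact Int.ofNat.inj this

/-- triangular exponent -/
def tri (n : ℤ) : ℕ := (n * (n - 1) / 2).toNat

lemma two_tri (n : ℤ) : 2 * (tri n : ℤ) = n * (n - 1) := by
  have h1 : 0 ≤ n * (n - 1) := by
    rcases le_or_gt n 0 with h | h
    · nlinarith
    · nlinarith
  have h2 : 2 ∣ n * (n - 1) := by
    have := Int.even_mul_pred_self n
    exact this.two_dvd
  unfold tri
  rw [Int.toNat_of_nonneg (by omega)]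
  omega

lemma tri_symm (n : ℤ) : tri (1 - n) = tri n := by
  have h1 := two_tri n
  have h2 := two_tri (1 - n)
  have : (1 - n) * (1 - n - 1) = n * (n-1) := by ring
  omega

/-- sign -/
def sgn (n : ℤ) : PS := ((Int.negOnePow n : ℤ) : PS)

lemma sgn_add (a b : ℤ) : sgn (a + b) = sgn a * sgn b := by
  unfold sgn; rw [Int.negOnePow_add]; push_cast; rfl
lemma sgn_one : sgn 1 = -1 := by simp [sgn]
lemma sgn_zero : sgn 0 = 1 := by simp [sgn]
lemma sgn_succ (a : ℤ) : sgn (a + 1) = - sgn a := by rw [sgn_add, sgn_one]; ring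
lemma sgn_pred (a : ℤ) : sgn (a - 1) = - sgn a := by
  have := sgn_succ (a - 1); rw [sub_add_cancel] at this; rw [this]; ring
lemma sgn_neg (a : ℤ) : sgn (-a) = sgn a := by unfold sgn; rw [Int.negOnePow_neg]
lemma sgn_symm (a : ℤ) : sgn (1 - a) = - sgn a := by
  rw [show 1 - a = -a + 1 by ring, sgn_succ, sgn_neg]
lemma sgn_sq (a : ℤ) : sgn a * sgn a = 1 := by
  rw [← sgn_add]
  unfold sgn
  rw [Int.negOnePow_even _ (Even.add_self a)]; simp
lemma sgn_nat (k : ℕ) : sgn (k : ℤ) = (-1) ^ k := by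
  induction k with
  | zero => simp [sgn_zero]
  | succ k ih => rw [Nat.cast_succ, sgn_succ, ih]; ring

/-- constants -/
abbrev cc (z : ℂ) : PS := PowerSeries.C z

lemma cc_pow (a : ℂ) (n : ℕ) : cc (a ^ n) = cc a ^ n := map_pow _ _ _
lemma cc_mul (a b : ℂ) : cc (a * b) = cc a * cc b := map_mul _ _ _
lemma cc_one : cc 1 = 1 := map_one _

lemma tri_nat (k : ℕ) : tri (k : ℤ) = k.choose 2 := by
  induction k with
  | zero => simp [tri]
  | succ k ih =>
    have h1 := two_tri (k : ℤ)
    have h2 := two_tri ((k+1 : ℕ) : ℤ)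
    rw [choose_two_succ, ← ih]
    have : ((k+1 : ℕ) : ℤ) * (((k+1 : ℕ) : ℤ) - 1) = (k : ℤ) * ((k : ℤ) - 1) + 2 * k := by
      push_cast; ring
    omega

lemma tri_neg_nat (k : ℕ) : tri (-(k : ℤ)) = k.choose 2 + k := by
  rw [← tri_symm, ← choose_two_succ, ← tri_nat]
  congr 1; push_cast; ring

lemma tt_C {z : ℂ} (hz : z ≠ 0) (Q : PS) (n : ℤ) :
    tt (cc z) (cc z⁻¹ * Q) Q n = cc (z ^ n) * (sgn n * Q ^ tri n) := by
  obtain ⟨k, rfl | rfl⟩ := n.eq_nat_or_neg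
  · rw [tt_nat, tri_nat, sgn_nat, zpow_natCast, cc_pow]
    ring
  · rw [tt_neg_nat, tri_neg_nat, sgn_neg, sgn_nat, zpow_neg, zpow_natCast, ← inv_pow, cc_pow]
    rw [mul_pow, pow_add]
    ring

/-- theta term -/
def tq (n : ℤ) : PS := sgn n * qq ^ tri n

/-- numerator term -/
def ph (n : ℤ) : PS := tq n * psi n

lemma tq_symm (n : ℤ) : tq (1 - n) = - tq n := by
  unfold tq; rw [tri_symm, sgn_symm]; ring

lemma ph_symm (n : ℤ) : ph (1 - n) = - ph n := by
  unfold ph; rw [tq_symm, psi_symm]; ring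

lemma natAbs_le_tri (n : ℤ) : n - 1 ≤ tri n ∧ -n ≤ tri n := by
  have := two_tri n
  constructor
  · rcases le_or_gt n 1 with h | h
    · omega
    · nlinarith
  · rcases le_or_gt 0 n with h | h
    · omega
    · nlinarith

lemma lf_tri {f : ℤ → PS} (h : ∀ n, qq ^ tri n ∣ f n) : LF f := by
  apply LF.of_dvd_finite h
  intro N
  refine (Set.finite_Icc (-(N:ℤ)) (N+1)).subset ?_
  intro n hn
  have := natAbs_le_tri n
  simp only [Set.mem_ofPred_eq] at hn
  constructor <;> omega

lemma tq_dvd (n : ℤ) : qq ^ tri n ∣ tq n := Dvd.intro_left _ rfl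

lemma lf_tq : LF tq := lf_tri tq_dvd
lemma lf_ph : LF ph := lf_tri (fun n => (tq_dvd n).mul_right _)

lemma jj_eq {z : ℂ} (hz : z ≠ 0) : jj z = ∑' n : ℤ, cc (z ^ n) * tq n := by
  unfold jj
  exact tsum_congr (fun n => tt_C hz qq n)

lemma ff_eq {z : ℂ} (hz : z ≠ 0) : ff z = ∑' n : ℤ, cc (z ^ n) * ph n := by
  unfold ff
  apply tsum_congr
  intro n
  have := tt_C hz qq n
  rw [this]
  unfold ph tq
  ring

lemma jj_prod {z : ℂ} (hz : z ≠ 0) : jj z = pinf (cc z) qq * pinf (cc z⁻¹ * qq) qq * PP :=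
  (JTP qq_dvd (zv hz)).symm

lemma jj_ne_zero {z : ℂ} (hz : z ≠ 0) (h1 : z ≠ 1) : jj z ≠ 0 := by
  rw [jj_prod hz, pinf_step qq_dvd]
  refine mul_ne_zero (mul_ne_zero (mul_ne_zero ?_ ?_) ?_) PP_ne_zero
  · rw [← map_one PowerSeries.C, ← map_sub]
    intro h
    have := PowerSeries.C_injective (h.trans (map_zero _).symm)
    exact h1 (sub_eq_zero.1 this).symm
  · exact pinf_ne_zero qq_dvd (Dvd.intro_left _ rfl)
  · exact pinf_ne_zero qq_dvd (Dvd.intro_left _ rfl)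

/-! ### supports -/

lemma SupR.cmul {m : ℕ} {T : Set (ZMod m)} {f : PS} (hf : SupR T f) (c : ℂ) : SupR T (cc c * f) := by
  intro n hn
  rw [PowerSeries.coeff_C_mul] at hn
  exact hf n (right_ne_zero_of_mul hn)

lemma SupR.sgnmul {m : ℕ} {T : Set (ZMod m)} {f : PS} (hf : SupR T f) (a : ℤ) :
    SupR T (sgn a * f) := by
  unfold sgn
  rcases Int.units_eq_one_or a.negOnePow with h | h
  · rw [h]; simpa using hf
  · rw [h]; simpa using hf.neg

lemma SupR.qpow {m : ℕ} {T : Set (ZMod m)} (k : ℕ) (h : (k : ZMod m) ∈ T) : SupR T (qq ^ k) := by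
  intro n hn
  rw [PowerSeries.coeff_X_pow] at hn
  split_ifs at hn with h1
  · rw [h1]; exact h
  · exact absurd rfl hn

lemma tri_zmod (m : ℕ) (n : ℤ) : 2 * (tri n : ZMod m) = n * (n - 1) := by
  have := two_tri n
  have := congrArg (fun x : ℤ => (x : ZMod m)) this
  push_cast at this
  exact this

lemma tq_sup {m : ℕ} (n : ℤ) : SupR {(tri n : ZMod m)} (tq n) := (SupR.qpow _ (Set.mem_singleton _)).sgnmul n

lemma ph_sup_aux {m : ℕ} (T : Set (ZMod m)) (i : ℕ)
    (h : ∀ e r : ZMod m, 2 * e = (i+1) * (i+1+1) + r * (r-1) + 4 * (i+1) * r → e ∈ T) :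
    SupR T (ph ((i : ℤ)+1)) := by
  unfold ph tq
  rw [psi_nat, Psi_explicit]
  rw [mul_assoc]
  apply SupR.sgnmul
  rw [← mul_assoc, ← pow_add, ← ps_tsum_mul_left _ _ (lf_Psi_explicit _)]
  apply SupR.tsum
  · exact (lf_Psi_explicit _).mul_left _
  · intro r
    rw [← sgn_nat, mul_left_comm, ← pow_add]
    apply SupR.sgnmul
    apply SupR.qpow
    apply h _ (r : ZMod m)
    have h1 := tri_zmod m ((i:ℤ) + 1)
    have h2 := tri_zmod m ((r+1 : ℕ) : ℤ)
    rw [tri_nat] at h2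
    push_cast at h1 h2 ⊢
    linear_combination h1 + h2

lemma ph_sup {m : ℕ} (T : Set (ZMod m)) (j : ℤ)
    (h : ∀ e r : ZMod m, 2 * e = j * (j+1) + r * (r-1) + 4 * j * r → e ∈ T)
    (h' : ∀ e r : ZMod m, 2 * e = (1-j) * (1-j+1) + r * (r-1) + 4 * (1-j) * r → e ∈ T) :
    SupR T (ph j) := by
  rcases le_or_gt j 0 with hj | hj
  · obtain ⟨i, hi⟩ : ∃ i : ℕ, 1 - j = (i:ℤ) + 1 := ⟨(-j).toNat, by omega⟩
    have : ph j = - ph (1 - j) := by rw [ph_symm]; ring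
    rw [this]
    apply SupR.neg
    rw [hi]
    apply ph_sup_aux
    intro e r he
    apply h' e r
    have := congrArg (fun x : ℤ => (x : ZMod m)) hi
    push_cast at this
    rw [this, he]
  · obtain ⟨i, hi⟩ : ∃ i : ℕ, j = (i:ℤ) + 1 := ⟨(j-1).toNat, by omega⟩
    rw [hi]
    apply ph_sup_aux
    intro e r he
    apply h e r
    have := congrArg (fun x : ℤ => (x : ZMod m)) hi
    push_cast at this
    rw [this, he]

lemma ph_sup3 (j : ℤ) : SupR ({0, 1} : Set (ZMod 3)) (ph j) := by
  have : ∀ j e r : ZMod 3, 2 * e = j * (j+1) + r * (r-1) + 4 * j * r → e = 0 ∨ e = 1 := by decide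
  apply ph_sup
  · intro e r h; exact this _ e r h
  · intro e r h; exact this _ e r h

lemma ph_sup5 (j : ℤ) (hj : (j : ZMod 5) ≠ 3) : SupR ({0, 1, 2, 3} : Set (ZMod 5)) (ph j) := by
  have h5 : ∀ j e r : ZMod 5, j ≠ 3 → 2 * e = j * (j+1) + r * (r-1) + 4 * j * r →
      e = 0 ∨ e = 1 ∨ e = 2 ∨ e = 3 := by decide
  have h5' : ∀ j : ZMod 5, j ≠ 3 → 1 - j ≠ 3 := by decide
  apply ph_sup
  · intro e r h; exact h5 _ e r hj h
  · intro e r h; exact h5 _ e r (h5' _ hj) h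

lemma ff_sup3 {z : ℂ} (hz : z ≠ 0) : SupR ({0, 1} : Set (ZMod 3)) (ff z) := by
  rw [ff_eq hz]
  exact SupR.tsum (lf_ph.mul_left _) (fun j => (ph_sup3 j).cmul _)

/-- generic antisymmetry -/
lemma tsum_refl_zero {f : ℤ → PS} (h : ∀ n, f (1 - n) = - f n) : ∑' n, f n = 0 :=
  tsum_antisymm f (Equiv.subLeft 1) h

lemma zpow_mod {p : ℕ} {ζ : ℂ} (hζ : ζ ^ p = 1) (hz : ζ ≠ 0) {a b : ℤ} (h : (a : ZMod p) = b) :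
    ζ ^ a = ζ ^ b := by
  rw [ZMod.intCast_eq_intCast_iff_dvd_sub] at h
  obtain ⟨c, hc⟩ := h
  have : b = a + p * c := by omega
  rw [this, zpow_add₀ hz, zpow_mul, zpow_natCast, hζ, one_zpow, mul_one]

lemma tri_mod3 (n : ℤ) : (tri n : ZMod 3) = if (n : ZMod 3) = 2 then 1 else 0 := by
  have := tri_zmod 3 n
  generalize (n : ZMod 3) = a at *
  generalize (tri n : ZMod 3) = b at *
  revert a b; decide

lemma rcmp_tq {m : ℕ} (r : ZMod m) (n : ℤ) : rcmp r (tq n) = if (tri n : ZMod m) = r then tq n else 0 := by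
  split_ifs with h
  · rw [← h]; exact (tq_sup n).rcmp_eq_self
  · exact (tq_sup n).rcmp_eq_zero r (fun hc => h hc.symm)

lemma cc_sup (m : ℕ) (c : ℂ) : SupR {(0 : ZMod m)} (cc c) := by
  intro n hn
  rw [PowerSeries.coeff_C] at hn
  split_ifs at hn with h
  · simp [h]
  · exact absurd rfl hn

lemma rcmp_cc {m : ℕ} (r : ZMod m) (c : ℂ) (f : PS) : rcmp r (cc c * f) = cc c * rcmp r f := by
  rw [rcmp_mul (cc_sup m c), sub_zero]

lemma rcmp_jj {z : ℂ} (hz : z ≠ 0) {m : ℕ} (r : ZMod m) :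
    rcmp r (jj z) = ∑' n : ℤ, cc (z ^ n) * (if (tri n : ZMod m) = r then tq n else 0) := by
  rw [jj_eq hz, rcmp_tsum (lf_tq.mul_left _)]
  apply tsum_congr
  intro n
  rw [rcmp_cc, rcmp_tq]

lemma jj_sup3 {z : ℂ} (hz : z ≠ 0) : SupR ({0, 1} : Set (ZMod 3)) (jj z) := by
  rw [jj_eq hz]
  refine SupR.tsum (lf_tq.mul_left _) (fun j => ((tq_sup j).mono ?_).cmul _)
  rw [Set.singleton_subset_iff, tri_mod3]
  split_ifs <;> simp

/-- splitting modulo 3 -/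
lemma split3 {f : PS} (h : SupR ({0, 1} : Set (ZMod 3)) f) :
    f = rcmp (0 : ZMod 3) f + rcmp (1 : ZMod 3) f := by
  have h1 := sum_rcmp (m := 3) f
  have h2 : rcmp (2 : ZMod 3) f = 0 := h.rcmp_eq_zero 2 (by simp; decide)
  have h3 : ∑ r : ZMod 3, rcmp r f = rcmp (0 : ZMod 3) f + rcmp (1 : ZMod 3) f + rcmp (2 : ZMod 3) f :=
    Fin.sum_univ_three _
  rw [h3, h2, add_zero] at h1
  exact h1.symm

lemma rcmp_mul_split3 (S j : PS) (h : SupR ({0, 1} : Set (ZMod 3)) j) (r : ZMod 3) :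
    rcmp r (S * j) = rcmp r S * rcmp (0 : ZMod 3) j + rcmp (r - 1) S * rcmp (1 : ZMod 3) j := by
  conv_lhs => rw [split3 h, mul_add, rcmp_add, rcmp_mul' (SupR.rcmp_self 0 j),
    rcmp_mul' (SupR.rcmp_self 1 j), sub_zero]

lemma S21 {z : ℂ} (hz : z ≠ 0) :
    rcmp (2 : ZMod 3) (SS z) * rcmp (0 : ZMod 3) (jj z) +
      rcmp (1 : ZMod 3) (SS z) * rcmp (1 : ZMod 3) (jj z) = 0 := by
  have h := rcmp_mul_split3 (SS z) (jj z) (jj_sup3 hz) 2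
  rw [SS_mul_jj hz, (ff_sup3 hz).rcmp_eq_zero 2 (by simp; decide)] at h
  rw [show (2 : ZMod 3) - 1 = 1 by decide] at h
  exact h.symm

theorem mod3_vanish {ω : ℂ} (hω : IsPrimitiveRoot ω 3) : rcmp (2 : ZMod 3) (SS ω) = 0 := by
  have hz : ω ≠ 0 := hω.ne_zero (by norm_num)
  have h := S21 hz
  have h1 : rcmp (1 : ZMod 3) (jj ω) = 0 := by
    rw [rcmp_jj hz]
    apply tsum_refl_zero
    intro n
    rw [tri_symm]
    split_ifs with h
    · have h3 : ((1 - n : ℤ) : ZMod 3) = (n : ℤ) := by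
        rw [tri_mod3] at h
        have hn : (n : ZMod 3) = 2 := by
          by_contra hc
          rw [if_neg hc] at h
          exact absurd h (by decide)
        push_cast
        rw [hn]; decide
      rw [zpow_mod hω.pow_eq_one hz h3, tq_symm]
      ring
    · simp
  have h0 : rcmp (0 : ZMod 3) (jj ω) = jj ω := by
    have := split3 (jj_sup3 hz)
    rw [h1, add_zero] at this
    exact this.symm
  rw [h1, h0, mul_zero, add_zero] at h
  exact (mul_eq_zero.1 h).resolve_right (jj_ne_zero hz (hω.ne_one (by norm_num)))

/-- the sign distinguishing the residues modulo 3 -/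
def chi (n : ℤ) : PS := if (n : ZMod 3) = 2 then -1 else 1

/-- twisted theta term -/
def th (n : ℤ) : PS := chi n * tq n

lemma chi_symm (n : ℤ) : chi (1 - n) = chi n := by
  unfold chi
  have : (((1 - n : ℤ) : ZMod 3) = 2) ↔ ((n : ZMod 3) = 2) := by
    push_cast
    generalize (n : ZMod 3) = a
    revert a; decide
  simp only [this]

lemma chi_add3 (n : ℤ) : chi (n + 3) = chi n := by
  unfold chi
  have : (((n + 3 : ℤ) : ZMod 3) = 2) ↔ ((n : ZMod 3) = 2) := by
    push_cast
    generalize (n : ZMod 3) = a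
    revert a; decide
  simp only [this]

lemma th_symm (n : ℤ) : th (1 - n) = - th n := by
  unfold th; rw [chi_symm, tq_symm]; ring

lemma lf_th : LF th := lf_tri (fun n => (tq_dvd n).mul_left _)

/-- residue 1 parts of the coefficients of `f(z) (J0 - J1)` -/
def EE (m : ℤ) : PS := ∑' j : ℤ, rcmp (1 : ZMod 3) (ph j * th (m - j))

lemma lf_conv (f : ℤ → PS) (g : ℤ → PS) (hf : LF f) (m : ℤ) :
    LF (fun j : ℤ => rcmp (1 : ZMod 3) (f j * g (m - j))) :=
  (hf.mul_right _).rcmp _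

lemma th_add3 (n : ℤ) (a b : ℕ) (h : (a : ℤ) + 3 * n + 3 = b) :
    qq ^ a * th (n + 3) = - (qq ^ b * th n) := by
  unfold th tq
  rw [chi_add3, show n + 3 = n + 1 + 1 + 1 by ring, sgn_succ, sgn_succ, sgn_succ]
  have h1 := two_tri n
  have h2 := two_tri (n + 1 + 1 + 1)
  have : (n+1+1+1) * (n + 1 + 1 + 1 - 1) = n * (n-1) + 6 * n + 6 := by ring
  have h3 : a + tri (n+1+1+1) = b + tri n := by omega
  have h4 := congrArg (fun x : ℕ => qq ^ x) h3
  simp only [pow_add] at h4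
  linear_combination (-chi n * sgn n) * h4

lemma tq_succ_nat (i : ℕ) : tq ((i : ℤ) + 1) = - (qq ^ i * tq i) := by
  unfold tq
  rw [sgn_succ, show ((i:ℤ) + 1) = ((i+1 : ℕ) : ℤ) by push_cast; rfl, tri_nat, tri_nat,
    choose_two_succ, pow_add]
  ring

lemma ph_rec_nat (i : ℕ) : ph i + tq ((i:ℤ) + 1) = - (qq ^ (3 * i) * (ph ((i:ℤ) + 1) + tq i)) := by
  rcases i with _ | i
  · have h1 := ph_symm 1
    have h2 := tq_symm 1
    simp only [Nat.cast_zero, zero_add, mul_zero, pow_zero, one_mul]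
    rw [sub_self] at h1 h2
    rw [h1, h2]
    ring
  · unfold ph
    rw [psi_nat (i+1)]
    have e : psi (((i+1 : ℕ) : ℤ)) = qq ^ (i+1) * Psi (2 * i + 1) := by
      rw [← psi_nat]; push_cast; rfl
    rw [e, tq_succ_nat]
    have r1 := Psi_rec (2*i+1)
    have r2 := Psi_rec (2*i+1+1)
    rw [show 2 * (i+1) + 1 = 2*i+1+1+1 by ring]
    have r3 : Psi (2*i+1) = 1 - qq ^ (2*i+2) + qq ^ (4*i+5) * Psi (2*i+1+1+1) := by
      rw [show 4*i+5 = (2*i+2) + (2*i+3) by ring, pow_add]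
      linear_combination r1 - qq ^ (2*i+2) * r2
    rw [r3]
    generalize tq ((i+1 : ℕ) : ℤ) = T
    generalize Psi (2*i+1+1+1) = Y
    ring

lemma ph_key (j n : ℤ) (m : ℕ) (h : j + n = m) :
    (ph (j-1) + tq j) * th (n+3) = qq ^ (3*m) * ((ph j + tq (j-1)) * th n) := by
  rcases le_or_gt j 0 with hj | hj
  · obtain ⟨i, hi⟩ : ∃ i : ℕ, j = -(i : ℤ) := ⟨(-j).toNat, by omega⟩
    have h0 := ph_rec_nat (i+1)
    have e1 : ph (j - 1) = - ph (((i+1 : ℕ) : ℤ) + 1) := by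
      rw [← ph_symm]; congr 1; push_cast; omega
    have e2 : tq (j - 1) = - tq (((i+1 : ℕ) : ℤ) + 1) := by
      rw [← tq_symm]; congr 1; push_cast; omega
    have e3 : ph j = - ph ((i+1 : ℕ) : ℤ) := by
      rw [← ph_symm]; congr 1; push_cast; omega
    have e4 : tq j = - tq ((i+1 : ℕ) : ℤ) := by
      rw [← tq_symm]; congr 1; push_cast; omega
    have h1 := th_add3 n 0 (3 * m + 3 * (i+1)) (by push_cast; omega)
    rw [pow_zero, one_mul, pow_add] at h1
    rw [e1, e2, e3, e4, h1]
    linear_combination (qq ^ (3*m) * th n) * h0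
  · obtain ⟨i, hi⟩ : ∃ i : ℕ, j = (i : ℤ) + 1 := ⟨(j-1).toNat, by omega⟩
    have h0 := ph_rec_nat i
    have h1 := th_add3 n (3 * i) (3 * m) (by push_cast; omega)
    rw [hi, add_sub_cancel_right, h0]
    linear_combination (- (ph ((i:ℤ)+1) + tq i)) * h1

lemma rcmp1_swap (a b : ℤ) : rcmp (1 : ZMod 3) (tq a * th b) = - rcmp (1 : ZMod 3) (tq b * th a) := by
  unfold th
  have e : (1 : ZMod 3) ≠ tri a + tri b ∨ chi a = - chi b := by
    rw [tri_mod3, tri_mod3]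
    unfold chi
    by_cases ha : (a : ZMod 3) = 2 <;> by_cases hb : (b : ZMod 3) = 2 <;> simp [ha, hb]
  have hs : SupR {((tri a : ZMod 3) + tri b)} (tq a * tq b) :=
    (tq_sup a).mul (tq_sup b) (by
      intro t ht u hu
      rw [Set.mem_singleton_iff] at *
      rw [ht, hu])
  have hchi : ∀ c (f : PS), SupR {((tri a : ZMod 3) + tri b)} f →
      SupR {((tri a : ZMod 3) + tri b)} (chi c * f) := by
    intro c f hf
    unfold chi
    split_ifs
    · simpa using hf.neg
    · simpa using hf
  rw [show tq a * (chi b * tq b) = chi b * (tq a * tq b) by ring,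
    show tq b * (chi a * tq a) = chi a * (tq a * tq b) by ring]
  rcases e with e | e
  · rw [(hchi b _ hs).rcmp_eq_zero 1 (by simpa using e), (hchi a _ hs).rcmp_eq_zero 1 (by simpa using e)]
    simp
  · rw [e, neg_mul, rcmp_neg, neg_neg]

lemma tq_th_zero (s : ℤ) : ∑' j : ℤ, rcmp (1 : ZMod 3) (tq j * th (s - j)) = 0 := by
  apply tsum_antisymm _ (Equiv.subLeft s)
  intro j
  simp only [Equiv.subLeft_apply, sub_sub_cancel]
  exact rcmp1_swap _ _

lemma qpow3_sup (m : ℕ) : SupR {(0 : ZMod 3)} (qq ^ (3*m)) := by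
  apply SupR.qpow
  simp only [Set.mem_singleton_iff]
  push_cast
  rw [show (3 : ZMod 3) = 0 by decide, zero_mul]

lemma EE_rec (m : ℕ) : EE ((m : ℤ) + 2) = qq ^ (3*m) * EE m := by
  have l1 : LF (fun j : ℤ => rcmp (1 : ZMod 3) (ph (j-1) * th ((m:ℤ) - j + 3))) :=
    ((lf_ph.comp (sub_left_injective (b := (1:ℤ)))).mul_right _).rcmp _
  have l2 : LF (fun j : ℤ => rcmp (1 : ZMod 3) (tq j * th ((m:ℤ) - j + 3))) :=
    (lf_tq.mul_right _).rcmp _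
  have l3 : LF (fun j : ℤ => rcmp (1 : ZMod 3) (ph j * th ((m:ℤ) - j))) :=
    (lf_ph.mul_right _).rcmp _
  have l4 : LF (fun j : ℤ => rcmp (1 : ZMod 3) (tq (j-1) * th ((m:ℤ) - j))) :=
    ((lf_tq.comp (sub_left_injective (b := (1:ℤ)))).mul_right _).rcmp _
  have h1 : EE ((m:ℤ) + 2) = ∑' j : ℤ, rcmp (1 : ZMod 3) (ph (j-1) * th ((m:ℤ) - j + 3)) := by
    unfold EE
    rw [← (Equiv.subRight (1:ℤ)).tsum_eq]
    apply tsum_congr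
    intro j
    simp only [Equiv.subRight_apply]
    congr 3; ring
  have h2 : ∑' j : ℤ, rcmp (1 : ZMod 3) (tq j * th ((m:ℤ) - j + 3)) = 0 := by
    rw [← tq_th_zero ((m:ℤ) + 3)]
    apply tsum_congr
    intro j
    congr 3; ring
  have h3 : ∑' j : ℤ, rcmp (1 : ZMod 3) (tq (j-1) * th ((m:ℤ) - j)) = 0 := by
    rw [← tq_th_zero ((m:ℤ) - 1), ← (Equiv.subRight (1:ℤ)).tsum_eq (fun j : ℤ =>
      rcmp (1 : ZMod 3) (tq j * th ((m:ℤ) - 1 - j)))]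
    apply tsum_congr
    intro j
    simp only [Equiv.subRight_apply]
    congr 3; ring
  have h4 : ∑' j : ℤ, (rcmp (1 : ZMod 3) (ph (j-1) * th ((m:ℤ) - j + 3)) +
      rcmp (1 : ZMod 3) (tq j * th ((m:ℤ) - j + 3))) =
      ∑' j : ℤ, qq ^ (3*m) * (rcmp (1 : ZMod 3) (ph j * th ((m:ℤ) - j)) +
      rcmp (1 : ZMod 3) (tq (j-1) * th ((m:ℤ) - j))) := by
    apply tsum_congr
    intro j
    rw [← rcmp_add, ← rcmp_add, ← add_mul, ← add_mul, ph_key j ((m:ℤ) - j) m (by ring),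
      rcmp_mul (qpow3_sup m), sub_zero]
  rw [l1.tsum_add l2, ps_tsum_mul_left _ _ (l3.add l4), l3.tsum_add l4, h2, h3, ← h1, add_zero,
    add_zero] at h4
  exact h4

lemma EE_symm (m : ℤ) : EE (2 - m) = EE m := by
  unfold EE
  rw [← (Equiv.subLeft (1:ℤ)).tsum_eq]
  apply tsum_congr
  intro j
  simp only [Equiv.subLeft_apply]
  rw [show 2 - m - (1 - j) = 1 - (m - j) by ring, th_symm, ph_symm, neg_mul_neg]

lemma EE_even (k : ℤ) : EE (2 * k) = qq ^ (6 * tri k) * EE 0 := by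
  have hnat : ∀ i : ℕ, EE (2 * (i:ℤ)) = qq ^ (6 * tri i) * EE 0 := by
    intro i
    induction i with
    | zero => simp [tri]
    | succ i ih =>
      have := EE_rec (2 * i)
      rw [show ((2 * i : ℕ) : ℤ) = 2 * (i : ℤ) by push_cast; rfl, ih] at this
      rw [show 2 * ((i+1 : ℕ) : ℤ) = 2 * (i:ℤ) + 2 by push_cast; ring, this, ← mul_assoc, ← pow_add,
        tri_nat, tri_nat, choose_two_succ]
      congr 2; ring
  rcases le_or_gt 0 k with h | h
  · lift k to ℕ using h
    exact hnat k
  · obtain ⟨i, hi⟩ : ∃ i : ℕ, 1 - k = i := ⟨(1-k).toNat, by omega⟩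
    rw [← EE_symm, show 2 - 2 * k = 2 * (1 - k) by ring, ← tri_symm, hi, hnat]

lemma EE_odd (k : ℤ) : EE (2 * k + 1) = qq ^ (3 * k.natAbs ^ 2) * EE 1 := by
  have hnat : ∀ i : ℕ, EE (2 * (i:ℤ) + 1) = qq ^ (3 * i ^ 2) * EE 1 := by
    intro i
    induction i with
    | zero => simp
    | succ i ih =>
      have := EE_rec (2 * i + 1)
      rw [show ((2 * i + 1 : ℕ) : ℤ) = 2 * (i : ℤ) + 1 by push_cast; rfl, ih] at this
      rw [show 2 * ((i+1 : ℕ) : ℤ) + 1 = 2 * (i:ℤ) + 1 + 2 by push_cast; ring, this, ← mul_assoc,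
        ← pow_add]
      congr 2; ring
  obtain ⟨i, rfl | rfl⟩ := k.eq_nat_or_neg
  · rw [hnat]; simp
  · rw [← EE_symm, show 2 - (2 * -(i:ℤ) + 1) = 2 * (i:ℤ) + 1 by ring, hnat]; simp

/-- parity splitting -/
lemma tsum_parity {f : ℤ → PS} (h : LF f) :
    ∑' n : ℤ, f n = ∑' k : ℤ, f (2 * k) + ∑' k : ℤ, f (2 * k + 1) := by
  classical
  have i1 : Function.Injective (fun k : ℤ => 2 * k) := fun a b h => by simpa using h
  have i2 : Function.Injective (fun k : ℤ => 2 * k + 1) := fun a b h => by simpa using h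
  have e1 : ∑' k : ℤ, f (2 * k) = ∑' n : ℤ, if n % 2 = 0 then f n else 0 := by
    rw [← i1.tsum_eq (f := fun n : ℤ => if n % 2 = 0 then f n else 0)]
    · apply tsum_congr; intro k; simp
    · intro n hn
      rw [Function.mem_support] at hn
      have : n % 2 = 0 := by by_contra hc; simp [hc] at hn
      exact ⟨n / 2, by simp only; omega⟩
  have e2 : ∑' k : ℤ, f (2 * k + 1) = ∑' n : ℤ, if n % 2 = 0 then 0 else f n := by
    rw [← i2.tsum_eq (f := fun n : ℤ => if n % 2 = 0 then 0 else f n)]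
    · apply tsum_congr; intro k
      rw [if_neg (by omega)]
    · intro n hn
      rw [Function.mem_support] at hn
      have : n % 2 ≠ 0 := by intro hc; simp [hc] at hn
      exact ⟨n / 2, by simp only; omega⟩
  rw [e1, e2, ← LF.tsum_add]
  · apply tsum_congr; intro n; split_ifs <;> simp
  · apply h.mono; intro n; split_ifs <;> simp
  · apply h.mono; intro n; split_ifs <;> simp

/-- convolution over the diagonals -/
lemma tsum_diag {f : ℤ × ℤ → PS} (h : LF f) :
    ∑' p, f p = ∑' m : ℤ, ∑' j : ℤ, f (j, m - j) := by
  let e : ℤ × ℤ ≃ ℤ × ℤ :=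
    { toFun := fun p => (p.2, p.1 - p.2)
      invFun := fun p => (p.1 + p.2, p.1)
      left_inv := fun p => by ext <;> simp
      right_inv := fun p => by ext <;> simp }
  rw [← e.tsum_eq, (h.comp e.injective).tsum_prod]
  rfl

lemma lf_diag {f : ℤ × ℤ → PS} (h : LF f) : LF (fun m : ℤ => ∑' j : ℤ, f (j, m - j)) := by
  let e : ℤ × ℤ ≃ ℤ × ℤ :=
    { toFun := fun p => (p.2, p.1 - p.2)
      invFun := fun p => (p.1 + p.2, p.1)
      left_inv := fun p => by ext <;> simp
      right_inv := fun p => by ext <;> simp }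
  exact (h.comp e.injective).tsum_fiber_dvd

lemma ppoch_dissect3 (z q : PS) (M : ℕ) :
    ppoch z q (3 * M) = ppoch z (q^3) M * ppoch (z * q) (q^3) M * ppoch (z * q^2) (q^3) M := by
  induction M with
  | zero => simp
  | succ M ih =>
    rw [show 3 * (M+1) = 3 * M + 1 + 1 + 1 by ring, ppoch_succ, ppoch_succ, ppoch_succ, ih,
      ppoch_succ, ppoch_succ, ppoch_succ]
    rw [← pow_mul]
    ring

lemma pinf_dissect3 {q : PS} (hq : qq ∣ q) (z : PS) :
    pinf z q = pinf z (q^3) * pinf (z * q) (q^3) * pinf (z * q^2) (q^3) := by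
  have hq3 : qq ∣ q^3 := dvd_pow hq (by norm_num)
  apply ps_ext_dvd
  intro N
  have h1 := pinf_dvd hq z (N := N) (M := 3 * N) (fun i hi =>
    ((pow_dvd_pow _ (by omega)).trans (pow_dvd_pow_of_dvd hq i)).mul_left z)
  have h2 := dvd_mul_sub_mul' (dvd_mul_sub_mul' (pinf_dvd' hq3 z N) (pinf_dvd' hq3 (z*q) N))
    (pinf_dvd' hq3 (z*q^2) N)
  rw [← ppoch_dissect3] at h2
  have := dvd_sub h1 h2
  rwa [sub_sub_sub_cancel_right] at this

/-- pentagonal exponent -/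
def pen (k : ℤ) : ℕ := tri k + k.natAbs ^ 2

lemma two_pen (k : ℤ) : 2 * (pen k : ℤ) = 3 * k ^ 2 - k := by
  unfold pen
  have := two_tri k
  push_cast
  rw [sq_abs]
  linarith

lemma tt_pen (X : PS) (k : ℤ) : tt X (X^2) (X^3) k = sgn k * X ^ pen k := by
  obtain ⟨i, rfl | rfl⟩ := k.eq_nat_or_neg
  · rw [tt_nat, sgn_nat, ← pow_mul, ← pow_add]
    refine congrArg (fun y : ℕ => (-1) ^ i * X ^ y) ?_
    have h1 := two_pen (i:ℤ)
    have h2 := two_tri (i:ℤ)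
    rw [tri_nat] at h2
    zify
    linarith
  · rw [tt_neg_nat, sgn_neg, sgn_nat, ← pow_mul, ← pow_mul, ← pow_add]
    refine congrArg (fun y : ℕ => (-1) ^ i * X ^ y) ?_
    have h1 := two_pen (-(i:ℤ))
    have h2 := two_tri (i:ℤ)
    rw [tri_nat] at h2
    zify
    linarith

lemma lf_pen {X : PS} (hX : qq ∣ X) : LF (fun k : ℤ => sgn k * X ^ pen k) := by
  apply lf_tri
  intro k
  refine Dvd.dvd.mul_left ?_ _
  refine (pow_dvd_pow_of_dvd hX _).trans (pow_dvd_pow _ ?_)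
  unfold pen; omega

lemma pentag {X : PS} (hX : qq ∣ X) : ∑' k : ℤ, sgn k * X ^ pen k = pinf X X := by
  have h := JTP (z := X) (v := X^2) (q := X^3) (dvd_pow hX (by norm_num)) (by ring)
  rw [pinf_dissect3 hX X, show X * X = X^2 by ring, show X * X^2 = X^3 by ring, h]
  exact tsum_congr (fun k => (tt_pen X k).symm)

/-- shifted theta term -/
def tq1 (n : ℤ) : PS := sgn n * qq ^ tri (n+1)

lemma tri_succ (n : ℤ) : (tri (n+1) : ℤ) = tri n + n := by
  have h1 := two_tri n
  have h2 := two_tri (n+1)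
  nlinarith

lemma tq1_eq (n : ℤ) : tq1 n = - tq (n+1) := by
  unfold tq1 tq; rw [sgn_succ]; ring

lemma lf_tq1 : LF tq1 := by
  have := (lf_tq.comp (add_left_injective (1:ℤ))).neg
  refine this.mono (fun n => ?_)
  rw [tq1_eq]

lemma tt_tq1 (n : ℤ) : tt qq 1 qq n = tq1 n := by
  unfold tq1
  obtain ⟨i, rfl | rfl⟩ := n.eq_nat_or_neg
  · rw [tt_nat, sgn_nat, ← pow_add]
    refine congrArg (fun y : ℕ => (-1) ^ i * qq ^ y) ?_
    have := tri_succ i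
    rw [tri_nat] at this
    omega
  · rw [tt_neg_nat, sgn_neg, sgn_nat, one_pow, one_mul]
    refine congrArg (fun y : ℕ => (-1) ^ i * qq ^ y) ?_
    have := tri_succ (-(i:ℤ))
    rw [tri_neg_nat] at this
    push_cast at this
    omega

lemma sum_tq1 : ∑' n : ℤ, tq1 n = 0 := by
  have h : ∑' n : ℤ, tq n = 0 := tsum_refl_zero tq_symm
  rw [← (Equiv.addRight (1:ℤ)).tsum_eq] at h
  simp only [Equiv.coe_addRight] at h
  rw [tsum_congr (fun n => tq1_eq n), tsum_neg, h, neg_zero]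

/-- the base `q^3` -/
abbrev RR : PS := qq ^ 3
lemma RR_dvd : qq ∣ RR := dvd_pow_self _ (by norm_num)
/-- `(q^3;q^3)_∞` -/
def P3 : PS := pinf RR RR

/-- class 2 part -/
def e1 (n : ℤ) : PS := if (n : ZMod 3) = 2 then - tq1 n else 0
/-- other part -/
def e0 (n : ℤ) : PS := if (n : ZMod 3) = 2 then 0 else tq1 n

lemma lf_e1 : LF e1 := lf_tq1.mono (fun n => by unfold e1; split_ifs <;> simp)
lemma lf_e0 : LF e0 := lf_tq1.mono (fun n => by unfold e0; split_ifs <;> simp)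

lemma sum_e1 : ∑' n : ℤ, e1 n = P3 := by
  have inj : Function.Injective (fun k : ℤ => 3 * k - 1) := fun a b h => by
    simp only at h; omega
  unfold P3
  rw [← pentag RR_dvd, ← inj.tsum_eq (f := e1)]
  · apply tsum_congr
    intro k
    have h2 : (((3 * k - 1 : ℤ)) : ZMod 3) = 2 := by
      push_cast
      rw [show (3 : ZMod 3) = 0 by decide, zero_mul]; decide
    simp only [e1]
    rw [if_pos h2]
    unfold tq1
    rw [sgn_pred, ← pow_mul, show 3 * k = k + (k + k) by ring, sgn_add, sgn_add k k, sgn_sq]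
    have h3 : tri (k + (k + k) - 1 + 1) = 3 * pen k := by
      have h1 := two_pen k
      have h2 := two_tri (k + (k + k) - 1 + 1)
      zify
      linarith
    rw [h3]; ring
  · intro n hn
    rw [Function.mem_support] at hn
    have : (n : ZMod 3) = 2 := by by_contra hc; simp [e1, hc] at hn
    have h3 : ((n + 1 : ℤ) : ZMod 3) = 0 := by push_cast; rw [this]; decide
    rw [ZMod.intCast_zmod_eq_zero_iff_dvd] at h3
    obtain ⟨c, hc⟩ := h3
    exact ⟨c, by simp only; push_cast at hc; omega⟩

lemma sum_e0 : ∑' n : ℤ, e0 n = P3 := by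
  have h := lf_e0.tsum_sub lf_e1
  have h2 : ∑' n : ℤ, (e0 n - e1 n) = 0 := by
    rw [← sum_tq1]
    apply tsum_congr
    intro n
    unfold e0 e1
    split_ifs <;> simp
  rw [h2, sum_e1] at h
  exact (sub_eq_zero.1 h.symm)

/-- components -/
def p1 (r : ZMod 3) (j : ℤ) : PS := tq1 j * rcmp (r - (tri j : ZMod 3)) (psi j)
lemma lf_p1 (r : ZMod 3) : LF (p1 r) := lf_tq1.mul_right _

/-- double sum term -/
def GG (p : ℤ × ℤ) : PS := p1 1 p.1 * e0 p.2 + p1 0 p.1 * e1 p.2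

lemma lf_GG : LF GG := ((lf_p1 1).prod_mul lf_e0).add ((lf_p1 0).prod_mul lf_e1)

lemma ph_rcmp (r : ZMod 3) (j : ℤ) : rcmp r (ph j) = tq j * rcmp (r - (tri j : ZMod 3)) (psi j) := by
  unfold ph; rw [rcmp_mul (tq_sup j)]

lemma tq_ne_zero (j : ℤ) : tq j ≠ 0 := by
  unfold tq
  refine mul_ne_zero ?_ (pow_ne_zero _ PowerSeries.X_ne_zero)
  intro h
  have := sgn_sq j
  rw [h] at this
  simp at this

lemma p1_add (j : ℤ) : p1 1 j + p1 0 j = tq1 j * psi j := by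
  have h1 := split3 (ph_sup3 j)
  rw [ph_rcmp, ph_rcmp, ← mul_add] at h1
  unfold ph at h1
  have := mul_left_cancel₀ (tq_ne_zero j) h1
  unfold p1
  rw [← mul_add, add_comm, ← this]

lemma sum_GG : ∑' p, GG p = qq * P3 * PP ^ 2 := by
  unfold GG
  rw [LF.tsum_add ((lf_p1 1).prod_mul lf_e0) ((lf_p1 0).prod_mul lf_e1),
    ← (lf_p1 1).tsum_mul_tsum lf_e0, ← (lf_p1 0).tsum_mul_tsum lf_e1, sum_e0, sum_e1, ← add_mul,
    ← (lf_p1 1).tsum_add (lf_p1 0), tsum_congr p1_add]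
  have := FF_q
  rw [tsum_congr (fun j => by rw [tt_tq1])] at this
  rw [this]; ring

lemma GG_eq (j n : ℤ) (a b : ℕ) (h : (a:ℤ) + (j + n) = b) :
    qq ^ a * GG (j, n) = qq ^ b * rcmp (1 : ZMod 3) (ph j * th n) := by
  have hk : qq ^ a * (tq1 j * tq1 n) = qq ^ b * (tq j * tq n) := by
    have : a + (tri (j+1) + tri (n+1)) = b + (tri j + tri n) := by
      have h1 := tri_succ j
      have h2 := tri_succ n
      omega
    have h4 := congrArg (fun x : ℕ => qq ^ x) this
    simp only [pow_add] at h4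
    unfold tq1 tq
    linear_combination (sgn j * sgn n) * h4
  unfold GG th
  have hs := tq_sup (m := 3) n
  simp only
  unfold p1 e0 e1 chi
  rw [tri_mod3] at hs
  split_ifs at hs ⊢ with hn
  · rw [show ph j * (-1 * tq n) = -(tq n * ph j) by ring, rcmp_neg, rcmp_mul hs, ph_rcmp,
      show (1:ZMod 3) - 1 = 0 by decide]
    linear_combination (-rcmp (0 - (tri j : ZMod 3)) (psi j)) * hk
  · rw [show ph j * (1 * tq n) = (tq n * ph j) by ring, rcmp_mul hs, ph_rcmp, sub_zero]
    linear_combination (rcmp (1 - (tri j : ZMod 3)) (psi j)) * hk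

/-- diagonal sums -/
def E1 (m : ℤ) : PS := ∑' j : ℤ, GG (j, m - j)

lemma E1_eq (m : ℤ) (a b : ℕ) (h : (a:ℤ) + m = b) : qq ^ a * E1 m = qq ^ b * EE m := by
  unfold E1 EE
  rw [← ps_tsum_mul_left, ← ps_tsum_mul_left _ _ (lf_conv ph th lf_ph m)]
  · apply tsum_congr
    intro j
    exact GG_eq j (m - j) a b (by omega)
  · exact lf_GG.comp (e := fun j : ℤ => (j, m - j)) (fun a b hab => (Prod.mk.inj hab).1)

lemma qq_cancel {a : ℕ} {f g : PS} (h : qq ^ a * f = qq ^ a * g) : f = g :=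
  mul_left_cancel₀ (pow_ne_zero _ PowerSeries.X_ne_zero) h

lemma E1_of (m : ℤ) (e c : ℕ) (X : PS) (he : EE m = qq ^ e * X) (h : (c : ℤ) = e + m) :
    E1 m = qq ^ c * X := by
  obtain ⟨a, b, hab⟩ : ∃ a b : ℕ, (a:ℤ) + m = b := ⟨m.natAbs, (m.natAbs + m).toNat, by omega⟩
  have := E1_eq m a b hab
  rw [he, ← mul_assoc, ← pow_add, show b + e = a + c by omega, pow_add, mul_assoc] at this
  exact qq_cancel this

/-- odd exponent -/
def od (k : ℤ) : ℕ := 2 * k.natAbs ^ 2 + (k+1).natAbs ^ 2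
lemma od_eq (k : ℤ) : (od k : ℤ) = 3 * k ^ 2 + 2 * k + 1 := by
  unfold od; push_cast; rw [sq_abs, sq_abs]; ring

lemma E1_even (k : ℤ) : E1 (2 * k) = qq ^ (2 * pen k) * EE 0 := by
  apply E1_of _ _ _ _ (EE_even k)
  have h1 := two_pen k
  have h2 := two_tri k
  push_cast
  linarith

lemma E1_odd (k : ℤ) : E1 (2 * k + 1) = qq ^ (od k) * EE 1 := by
  apply E1_of _ _ _ _ (EE_odd k)
  rw [od_eq]
  push_cast
  rw [sq_abs]; ring

lemma lf_le {e : ℤ → ℕ} (h : ∀ k, (k^2 - k : ℤ) ≤ 2 * e k) : LF (fun k : ℤ => qq ^ e k) := by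
  apply lf_tri
  intro k
  apply pow_dvd_pow
  have h1 := two_tri k
  have h2 := h k
  zify
  nlinarith

lemma lf_2pen : LF (fun k : ℤ => qq ^ (2 * pen k)) := by
  apply lf_le; intro k; have := two_pen k; push_cast; nlinarith [sq_nonneg k]
lemma lf_od : LF (fun k : ℤ => qq ^ od k) := by
  apply lf_le; intro k; rw [od_eq]; nlinarith [sq_nonneg k, sq_nonneg (k+1)]
lemma lf_sq3 : LF (fun k : ℤ => qq ^ (3 * k.natAbs ^ 2)) := by
  apply lf_le; intro k; push_cast; rw [sq_abs]
  rcases le_or_gt 0 k with h | h <;> nlinarith [sq_nonneg (k+1), sq_nonneg k]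
lemma lf_6tri : LF (fun k : ℤ => qq ^ (6 * tri k)) := by
  apply lf_le; intro k; have := two_tri k; push_cast; nlinarith

/-- theta constants -/
def AA : PS := ∑' k : ℤ, qq ^ (3 * k.natAbs ^ 2)
/-- theta constants -/
def BB : PS := ∑' k : ℤ, qq ^ (6 * tri k)

lemma eq_q : (∑' k : ℤ, qq ^ (2 * pen k)) * EE 0 + (∑' k : ℤ, qq ^ od k) * EE 1 =
    qq * P3 * PP ^ 2 := by
  rw [← sum_GG, tsum_diag lf_GG]
  have : LF E1 := lf_diag lf_GG
  change _ = ∑' m, E1 m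
  rw [tsum_parity this, ← ps_tsum_mul_right _ _ lf_2pen, ← ps_tsum_mul_right _ _ lf_od]
  simp only [E1_even, E1_odd]

/-- squaring a theta series -/
lemma theta_sq (u α β : ℤ → PS) (hu : LF u) (hα : LF α) (hβ : LF β)
    (h0 : ∀ k s, u (k+s) * u (k-s) = qq ^ (3 * s.natAbs ^ 2) * α k)
    (h1 : ∀ k s, u (k+1+s) * u (k-s) = - (qq ^ (6 * tri (-s)) * β k)) :
    (∑' n, u n) ^ 2 = AA * ∑' k, α k - BB * ∑' k, β k := by
  rw [sq, hu.tsum_mul_tsum hu, tsum_diag (hu.prod_mul hu), tsum_parity (lf_diag (hu.prod_mul hu)),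
    ← ps_tsum_mul_left _ _ hα, ← ps_tsum_mul_left _ _ hβ, sub_eq_add_neg, ← tsum_neg]
  have a0 : ∀ k : ℤ, ∑' j : ℤ, u j * u (2 * k - j) = AA * α k := by
    intro k
    unfold AA
    rw [← ps_tsum_mul_right _ _ lf_sq3, ← (Equiv.addLeft k).tsum_eq]
    apply tsum_congr
    intro s
    rw [← h0]
    simp only [Equiv.coe_addLeft]
    refine congrArg (fun y => u (k+s) * u y) ?_
    ring
  have a1 : ∀ k : ℤ, ∑' j : ℤ, u j * u (2 * k + 1 - j) = -(BB * β k) := by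
    intro k
    unfold BB
    rw [← (Equiv.neg ℤ).tsum_eq (fun k : ℤ => qq ^ (6 * tri k)), ← neg_mul, ← tsum_neg,
      ← ps_tsum_mul_right, ← (Equiv.addLeft (k+1)).tsum_eq]
    · apply tsum_congr
      intro s
      simp only [Equiv.coe_addLeft, Equiv.neg_apply]
      rw [neg_mul, ← h1]
      refine congrArg (fun y => u (k+1+s) * u y) ?_
      ring
    · exact (lf_6tri.comp (e := fun k : ℤ => -k) neg_injective).neg
  simp only [a0, a1]

lemma pen_sq : PP ^ 2 = AA * (∑' k : ℤ, qq ^ (2 * pen k)) - BB * (∑' k : ℤ, qq ^ od k) := by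
  unfold PP
  rw [← pentag qq_dvd]
  apply theta_sq _ _ _ (lf_pen qq_dvd) lf_2pen lf_od
  · intro k s
    have : pen (k+s) + pen (k-s) = 3 * s.natAbs ^ 2 + 2 * pen k := by
      have h1 := two_pen (k+s)
      have h2 := two_pen (k-s)
      have h3 := two_pen k
      zify; rw [sq_abs]; linarith
    rw [mul_mul_mul_comm, ← pow_add, ← pow_add, this, ← sgn_add, show k + s + (k - s) = k + k by ring,
      sgn_add, sgn_sq, one_mul]
  · intro k s
    have : pen (k+1+s) + pen (k-s) = 6 * tri (-s) + od k := by
      have h1 := two_pen (k+1+s)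
      have h2 := two_pen (k-s)
      have h3 := od_eq k
      have h4 := two_tri (-s)
      zify; linarith
    rw [mul_mul_mul_comm, ← pow_add, ← pow_add, this, ← sgn_add,
      show k + 1 + s + (k - s) = k + k + 1 by ring, sgn_succ, sgn_add, sgn_sq, neg_mul, one_mul]

/-- theta function in base `Q` -/
def jb (z : ℂ) (Q : PS) : PS := ∑' n : ℤ, cc (z ^ n) * (sgn n * Q ^ tri n)

lemma jb_sq {z : ℂ} (hz : z ≠ 0) : jb z RR ^ 2 = AA * (∑' k : ℤ, cc (z^(2*k)) * qq ^ (6 * tri k))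
    - BB * (∑' k : ℤ, cc (z^(2*k+1)) * qq ^ (3 * k.natAbs ^ 2)) := by
  unfold jb
  apply theta_sq
  · apply lf_tri
    intro n
    refine ((pow_dvd_pow_of_dvd RR_dvd _).mul_left _).mul_left _
  · exact lf_6tri.mul_left _
  · exact lf_sq3.mul_left _
  · intro k s
    have : 3 * tri (k+s) + 3 * tri (k-s) = 3 * s.natAbs ^ 2 + 6 * tri k := by
      have h1 := two_tri (k+s)
      have h2 := two_tri (k-s)
      have h3 := two_tri k
      zify; rw [sq_abs]; linarith
    rw [mul_mul_mul_comm, ← cc_mul, ← zpow_add₀ hz, mul_mul_mul_comm, ← pow_mul, ← pow_mul, ← pow_add,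
      this, ← sgn_add, show k + s + (k - s) = k + k by ring,
      sgn_add, sgn_sq, one_mul, pow_add, show 2 * k = k + k by ring]
    ring
  · intro k s
    have : 3 * tri (k+1+s) + 3 * tri (k-s) = 6 * tri (-s) + 3 * k.natAbs ^ 2 := by
      have h1 := two_tri (k+1+s)
      have h2 := two_tri (k-s)
      have h4 := two_tri (-s)
      zify; rw [sq_abs]; linarith
    rw [mul_mul_mul_comm, ← cc_mul, ← zpow_add₀ hz, mul_mul_mul_comm, ← pow_mul, ← pow_mul, ← pow_add,
      this, ← sgn_add, show k + 1 + s + (k - s) = k + k + 1 by ring, sgn_succ,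
      sgn_add, sgn_sq, pow_add, show 2 * k = k + k by ring]
    ring

/-- `J0 - J1` -/
def jd (z : ℂ) : PS := ∑' n : ℤ, cc (z ^ n) * th n

lemma jd_eq {z : ℂ} (hz : z ≠ 0) : jd z = rcmp (0 : ZMod 3) (jj z) - rcmp (1 : ZMod 3) (jj z) := by
  rw [rcmp_jj hz, rcmp_jj hz, ← LF.tsum_sub]
  · apply tsum_congr
    intro n
    rw [tri_mod3]
    unfold th chi
    have a : (1 : ZMod 3) ≠ 0 := by decide
    by_cases h : (n : ZMod 3) = 2
    · simp [h, a]
    · simp [h, a.symm]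
  · refine LF.mul_left (lf_tq.mono fun n => ?_) _
    split_ifs <;> simp
  · refine LF.mul_left (lf_tq.mono fun n => ?_) _
    split_ifs <;> simp

lemma ff_jd {z : ℂ} (hz : z ≠ 0) : rcmp (1 : ZMod 3) (ff z * jd z) =
    (∑' k : ℤ, cc (z^(2*k)) * qq ^ (6 * tri k)) * EE 0 +
    (∑' k : ℤ, cc (z^(2*k+1)) * qq ^ (3 * k.natAbs ^ 2)) * EE 1 := by
  have l1 : LF (fun j : ℤ => cc (z ^ j) * ph j) := lf_ph.mul_left _
  have l2 : LF (fun j : ℤ => cc (z ^ j) * th j) := lf_th.mul_left _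
  have l3 := (l1.prod_mul l2).rcmp (1 : ZMod 3)
  have hm : ∀ m : ℤ, ∑' j : ℤ, rcmp (1 : ZMod 3) (cc (z ^ j) * ph j * (cc (z ^ (m - j)) * th (m - j))) =
      cc (z ^ m) * EE m := by
    intro m
    unfold EE
    rw [← ps_tsum_mul_left _ _ (lf_conv ph th lf_ph m)]
    apply tsum_congr
    intro j
    rw [mul_mul_mul_comm, ← cc_mul, ← zpow_add₀ hz, rcmp_cc, add_sub_cancel]
  unfold jd
  rw [ff_eq hz, l1.tsum_mul_tsum l2, rcmp_tsum (l1.prod_mul l2), tsum_diag l3,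
    tsum_parity (lf_diag l3)]
  simp only [hm]
  rw [← ps_tsum_mul_right _ _ (lf_6tri.mul_left _), ← ps_tsum_mul_right _ _ (lf_sq3.mul_left _)]
  simp only [EE_even, EE_odd, mul_assoc]

lemma eq_1 : BB * EE 0 + AA * EE 1 = 0 := by
  have h := ff_jd (z := 1) one_ne_zero
  have h0 : ff 1 = 0 := by
    rw [ff_eq one_ne_zero]
    apply tsum_refl_zero
    intro n
    rw [ph_symm]; simp
  rw [h0, zero_mul, rcmp_zero] at h
  simp only [one_zpow, cc_one, one_mul] at h
  exact h.symm

lemma EE0_eq : EE 0 = qq * P3 * AA := by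
  apply mul_left_cancel₀ (pow_ne_zero 2 PP_ne_zero)
  have h1 := eq_1
  have h2 := eq_q
  have h3 := pen_sq
  generalize (∑' k : ℤ, qq ^ (2 * pen k)) = a at *
  generalize (∑' k : ℤ, qq ^ od k) = b at *
  linear_combination EE 0 * h3 + AA * h2 - b * h1

lemma EE1_eq : EE 1 = - (qq * P3 * BB) := by
  apply mul_left_cancel₀ (pow_ne_zero 2 PP_ne_zero)
  have h1 := eq_1
  have h2 := eq_q
  have h3 := pen_sq
  generalize (∑' k : ℤ, qq ^ (2 * pen k)) = a at *
  generalize (∑' k : ℤ, qq ^ od k) = b at *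
  linear_combination EE 1 * h3 - BB * h2 + a * h1

theorem ff_jd_eq {z : ℂ} (hz : z ≠ 0) : rcmp (1 : ZMod 3) (ff z * jd z) = qq * P3 * jb z RR ^ 2 := by
  rw [ff_jd hz, jb_sq hz, EE0_eq, EE1_eq]; ring

lemma jb_prod {z : ℂ} (hz : z ≠ 0) {Q : PS} (hQ : qq ∣ Q) :
    jb z Q = (1 - cc z) * pinf (cc z * Q) Q * pinf (cc z⁻¹ * Q) Q * pinf (1 * Q) Q := by
  rw [← pinf_step hQ, one_mul, JTP hQ (by rw [← mul_assoc, C_mul_C_inv hz, one_mul])]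
  exact tsum_congr (fun n => (tt_C hz Q n).symm)

lemma cc_one_sub_ne {z : ℂ} (h1 : z ≠ 1) : (1 : PS) - cc z ≠ 0 := by
  rw [← map_one PowerSeries.C, ← map_sub]
  intro h
  have := PowerSeries.C_injective (h.trans (map_zero _).symm)
  exact h1 (sub_eq_zero.1 this).symm

lemma jb_ne_zero {z : ℂ} (hz : z ≠ 0) (h1 : z ≠ 1) {Q : PS} (hQ : qq ∣ Q) : jb z Q ≠ 0 := by
  rw [jb_prod hz hQ]
  exact mul_ne_zero (mul_ne_zero (mul_ne_zero (cc_one_sub_ne h1)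
    (pinf_ne_zero hQ (hQ.mul_left _))) (pinf_ne_zero hQ (hQ.mul_left _)))
    (pinf_ne_zero hQ (hQ.mul_left _))

lemma S_ids {z : ℂ} (hz : z ≠ 0) :
    rcmp (1 : ZMod 3) (SS z) * rcmp (0 : ZMod 3) (jj z) ^ 2 -
      rcmp (2 : ZMod 3) (SS z) * rcmp (1 : ZMod 3) (jj z) ^ 2 = qq * P3 * jb z RR ^ 2 := by
  rw [← ff_jd_eq hz, jd_eq hz, mul_sub, rcmp_sub, rcmp_mul' (SupR.rcmp_self 0 _),
    rcmp_mul' (SupR.rcmp_self 1 _), ← SS_mul_jj hz, rcmp_mul_split3 _ _ (jj_sup3 hz),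
    rcmp_mul_split3 _ _ (jj_sup3 hz)]
  rw [show (1 : ZMod 3) - 0 = 1 by decide, show (1 : ZMod 3) - 1 = 0 by decide,
    show (0 : ZMod 3) - 1 = 2 by decide]
  ring

/-- the cubic form -/
def DD (z : ℂ) : PS := rcmp (0 : ZMod 3) (jj z) ^ 3 + rcmp (1 : ZMod 3) (jj z) ^ 3

lemma S1_DD {z : ℂ} (hz : z ≠ 0) : rcmp (1 : ZMod 3) (SS z) * DD z =
    rcmp (0 : ZMod 3) (jj z) * (qq * P3 * jb z RR ^ 2) := by
  rw [← S_ids hz]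
  have h := S21 hz
  unfold DD
  linear_combination (rcmp (1 : ZMod 3) (jj z) ^ 2) * h

lemma S2_DD {z : ℂ} (hz : z ≠ 0) : rcmp (2 : ZMod 3) (SS z) * DD z =
    - rcmp (1 : ZMod 3) (jj z) * (qq * P3 * jb z RR ^ 2) := by
  rw [← S_ids hz]
  have h := S21 hz
  unfold DD
  linear_combination (rcmp (0 : ZMod 3) (jj z) ^ 2) * h

lemma jb_twist {z w : ℂ} (hz : z ≠ 0) (hw : w ^ 3 = 1) :
    jb z (cc w * qq) = rcmp (0 : ZMod 3) (jj z) + cc w * rcmp (1 : ZMod 3) (jj z) := by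
  rw [rcmp_jj hz, rcmp_jj hz]
  have l : ∀ r : ZMod 3, LF (fun n : ℤ => cc (z ^ n) * (if (tri n : ZMod 3) = r then tq n else 0)) := by
    intro r
    refine LF.mul_left (lf_tq.mono fun n => ?_) _
    split_ifs <;> simp
  rw [← ps_tsum_mul_left _ _ (l 1), ← (l 0).tsum_add ((l 1).mul_left _)]
  unfold jb
  apply tsum_congr
  intro n
  have a : (1 : ZMod 3) ≠ 0 := by decide
  rw [mul_pow, ← cc_pow]
  have hp : ∀ r : ℕ, (tri n : ZMod 3) = r → w ^ tri n = w ^ r := by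
    intro r hr
    have := zpow_mod (p := 3) (a := tri n) (b := r) hw (by rintro rfl; norm_num at hw) (by push_cast; exact hr)
    simpa using this
  by_cases h : (n : ZMod 3) = 2
  · have ht : (tri n : ZMod 3) = 1 := by rw [tri_mod3, if_pos h]
    rw [hp 1 (by rw [ht]; norm_num), ht]
    simp only [a, if_true, if_false, pow_one]
    unfold tq; ring
  · have ht : (tri n : ZMod 3) = 0 := by rw [tri_mod3, if_neg h]
    rw [hp 0 (by rw [ht]; norm_num), ht]
    simp only [a.symm, if_true, if_false, pow_zero, cc_one]
    unfold tq; ring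

lemma cc_add (a b : ℂ) : cc (a + b) = cc a + cc b := map_add _ _ _
lemma cc_zero : cc 0 = 0 := map_zero _

section cube

lemma cc_om3 {ω : ℂ} (hω : IsPrimitiveRoot ω 3) : cc ω ^ 3 = 1 := by
  rw [← cc_pow, hω.pow_eq_one, cc_one]

lemma cc_om_sum {ω : ℂ} (hω : IsPrimitiveRoot ω 3) : 1 + cc ω + cc ω ^ 2 = 0 := by
  have h := hω.geom_sum_eq_zero (by norm_num)
  rw [Finset.sum_range_succ, Finset.sum_range_succ, Finset.sum_range_succ] at h
  simp only [Finset.sum_range_zero, pow_zero, pow_one, zero_add] at h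
  have h2 := congrArg cc h
  rw [cc_add, cc_add, cc_one, cc_pow, cc_zero] at h2
  exact h2

lemma cube_prod {w : PS} (h3 : w ^ 3 = 1) (hs : 1 + w + w ^ 2 = 0) (x : PS) {q : PS} (hq : qq ∣ q) :
    pinf x q * pinf (w * x) q * pinf (w ^ 2 * x) q = pinf (x^3) (q^3) := by
  unfold pinf
  rw [← (pinf_mult hq x).tprod_mul (pinf_mult hq (w * x)),
    ← ((pinf_mult hq x).mul (pinf_mult hq (w * x))).tprod_mul (pinf_mult hq (w^2 * x))]
  apply tprod_congr
  intro i
  rw [← pow_mul, mul_comm 3 i, pow_mul]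
  generalize q ^ i = y
  have e : (1 - x * y) * (1 - w * x * y) * (1 - w ^ 2 * x * y) =
    1 - (1 + w + w^2) * (x * y) + w * (1 + w + w^2) * (x*y)^2 - w^3 * (x * y)^3 := by ring
  rw [e, hs, h3]; ring

lemma TT {w : PS} (h3 : w ^ 3 = 1) (hs : 1 + w + w ^ 2 = 0) (x : PS) :
    pinf (x * qq) qq * pinf (x * (w * qq)) (w * qq) * pinf (x * (w^2 * qq)) (w^2 * qq) *
      pinf (x^3 * RR^3) (RR^3) = pinf (x * RR) RR ^ 3 * pinf (x^3 * RR) RR := by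
  have d : ∀ v : PS, v ^ 3 = 1 → pinf (x * (v * qq)) (v * qq) =
      pinf (v * (x * qq)) RR * pinf (v^2 * (x * qq^2)) RR * pinf (x * RR) RR := by
    intro v hv
    rw [pinf_dissect3 (Dvd.intro_left v rfl) (x * (v * qq))]
    have e1 : (v * qq) ^ 3 = RR := by rw [mul_pow, hv, one_mul]
    have e2 : x * (v * qq) * (v * qq)^2 = x * RR := by rw [← e1]; ring
    rw [e1, e2, show x * (v * qq) = v * (x * qq) by ring,
      show v * (x * qq) * (v * qq) = v^2 * (x * qq^2) by ring]
  have d0 := d 1 (one_pow 3)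
  have d1 := d w h3
  have d2 := d (w^2) (by rw [← pow_mul, mul_comm, pow_mul, h3, one_pow])
  simp only [one_mul, one_pow] at d0
  have w4 : (w^2)^2 = w := by rw [← pow_mul]; linear_combination w * h3
  rw [w4] at d2
  rw [d0, d1, d2, pinf_dissect3 RR_dvd (x^3 * RR)]
  have c1 := cube_prod h3 hs (x * qq) RR_dvd
  have c2 := cube_prod h3 hs (x * qq^2) RR_dvd
  rw [show (x * qq)^3 = x^3 * RR by ring] at c1
  rw [show (x * qq^2)^3 = x^3 * RR * RR by ring] at c2
  rw [show x^3 * RR * RR^2 = x^3 * RR^3 by ring, ← c1, ← c2]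
  ring
end cube

lemma exists_om : ∃ ω : ℂ, IsPrimitiveRoot ω 3 := ⟨_, Complex.isPrimitiveRoot_exp 3 (by norm_num)⟩

lemma DD_eq {z : ℂ} (hz : z ≠ 0) : DD z * jb (z^3) (RR^3) = jb z RR ^ 3 * jb (z^3) RR := by
  obtain ⟨ω, hω⟩ := exists_om
  have h3 := cc_om3 hω
  have hs := cc_om_sum hω
  have h3' : ω ^ 3 = 1 := hω.pow_eq_one
  have hD : DD z = jb z qq * jb z (cc ω * qq) * jb z (cc ω ^ 2 * qq) := by
    have t0 := jb_twist hz (w := 1) (by norm_num)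
    have t1 := jb_twist hz h3'
    have t2 := jb_twist hz (w := ω^2) (by rw [← pow_mul, mul_comm, pow_mul, h3', one_pow])
    rw [cc_one, one_mul, one_mul] at t0
    rw [cc_pow] at t2
    rw [t0, t1, t2]
    unfold DD
    generalize rcmp (0 : ZMod 3) (jj z) = a
    generalize rcmp (1 : ZMod 3) (jj z) = b
    linear_combination (-a^2*b - cc ω * a * b^2) * hs - b^3 * h3
  have hzz : z ^ 3 ≠ 0 := pow_ne_zero _ hz
  rw [hD, jb_prod hz qq_dvd, jb_prod hz (Dvd.intro_left _ rfl), jb_prod hz (Dvd.intro_left _ rfl),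
    jb_prod hzz (dvd_pow RR_dvd (by norm_num)), jb_prod hz RR_dvd, jb_prod hzz RR_dvd,
    ← inv_pow, cc_pow, cc_pow]
  have a := TT h3 hs (cc z)
  have b := TT h3 hs (cc z⁻¹)
  have c := TT h3 hs 1
  rw [one_pow] at c
  generalize cc z⁻¹ = v at *
  generalize cc z = u at *
  generalize cc ω = w at *
  have := congrArg₂ (· * ·) (congrArg₂ (· * ·) a b) c
  generalize pinf (u * qq) qq = x1 at *
  generalize pinf (v * qq) qq = x2 at *
  generalize pinf (1 * qq) qq = x3 at *
  generalize pinf (u * (w * qq)) (w * qq) = x4 at *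
  generalize pinf (v * (w * qq)) (w * qq) = x5 at *
  generalize pinf (1 * (w * qq)) (w * qq) = x6 at *
  generalize pinf (u * (w^2 * qq)) (w^2 * qq) = x7 at *
  generalize pinf (v * (w^2 * qq)) (w^2 * qq) = x8 at *
  generalize pinf (1 * (w^2 * qq)) (w^2 * qq) = x9 at *
  generalize pinf (u * RR) RR = y1 at *
  generalize pinf (v * RR) RR = y2 at *
  generalize pinf (1 * RR) RR = y3 at *
  generalize pinf (u^3 * RR) RR = y4 at *
  generalize pinf (v^3 * RR) RR = y5 at *
  generalize pinf (u^3 * RR^3) (RR^3) = y6 at *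
  generalize pinf (v^3 * RR^3) (RR^3) = y7 at *
  generalize pinf (1 * RR^3) (RR^3) = y8 at *
  linear_combination ((1-u)^3 * (1-u^3)) * this

section five
lemma cc_five {ζ : ℂ} (hζ : IsPrimitiveRoot ζ 5) : 1 + cc ζ + cc ζ ^ 2 + cc ζ ^ 3 + cc ζ ^ 4 = 0 := by
  have h := hζ.geom_sum_eq_zero (by norm_num)
  simp only [Finset.sum_range_succ, Finset.sum_range_zero, pow_zero, pow_one, zero_add] at h
  have h2 := congrArg cc h
  rw [cc_add, cc_add, cc_add, cc_add, cc_one, cc_pow, cc_pow, cc_pow, cc_zero] at h2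
  exact h2

lemma five_prod {w : PS} (h5 : w ^ 5 = 1) (hs : 1 + w + w ^ 2 + w ^ 3 + w ^ 4 = 0) (x : PS) {q : PS}
    (hq : qq ∣ q) :
    pinf x q * pinf (w * x) q * pinf (w ^ 2 * x) q * pinf (w ^ 3 * x) q * pinf (w ^ 4 * x) q =
      pinf (x^5) (q^5) := by
  have m := fun z => pinf_mult hq z
  unfold pinf
  rw [← (m x).tprod_mul (m (w * x)), ← ((m x).mul (m (w * x))).tprod_mul (m (w^2 * x)),
    ← (((m x).mul (m (w * x))).mul (m (w^2*x))).tprod_mul (m (w^3 * x)),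
    ← ((((m x).mul (m (w * x))).mul (m (w^2*x))).mul (m (w^3*x))).tprod_mul (m (w^4 * x))]
  apply tprod_congr
  intro i
  rw [← pow_mul, mul_comm 5 i, pow_mul]
  generalize q ^ i = y
  linear_combination (-(x*y) + (w + w^3) * (x*y)^2 - (w^3 + w^5) * (x*y)^3 + w^6 * (x*y)^4) * hs
    - (w^5 + 1) * (x*y)^5 * h5
end five

lemma DD_ne {z : ℂ} (hz : z ≠ 0) (h1 : z ≠ 1) (S J : PS) (h : S * DD z = J * (qq * P3 * jb z RR ^ 2)) :
    S * (jb z RR * jb (z^3) RR) = qq * J * P3 * jb (z^3) (RR^3) := by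
  apply mul_left_cancel₀ (pow_ne_zero 2 (jb_ne_zero hz h1 RR_dvd))
  have := DD_eq hz
  linear_combination (-S) * this + jb (z^3) (RR^3) * h

/-- base 15 eta -/
def P15 : PS := pinf (RR^5) (RR^5)

lemma P3_ne : P3 ≠ 0 := pinf_ne_zero RR_dvd RR_dvd
lemma RR5_dvd : qq ∣ RR^5 := dvd_pow RR_dvd (by norm_num)
lemma P15_ne : P15 ≠ 0 := pinf_ne_zero RR5_dvd RR5_dvd

lemma P15_sup : SupR ({0} : Set (ZMod 5)) P15 := by
  unfold P15
  rw [← pentag RR5_dvd]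
  refine SupR.tsum (lf_pen RR5_dvd) (fun k => SupR.sgnmul ?_ k)
  rw [← pow_mul, ← pow_mul]
  apply SupR.qpow
  push_cast
  rw [show (5 : ZMod 5) = 0 by decide]
  simp

lemma jb_jb {ζ : ℂ} (hζ : IsPrimitiveRoot ζ 5) :
    jb ζ RR * jb (ζ^3) RR = (1 - cc ζ) * (1 - cc (ζ^3)) * P3 * P15 := by
  have hz : ζ ≠ 0 := hζ.ne_zero (by norm_num)
  have h5 : ζ ^ 5 = 1 := hζ.pow_eq_one
  have i1 : ζ⁻¹ = ζ^4 := by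
    apply inv_eq_of_mul_eq_one_right; linear_combination h5
  have i3 : (ζ^3)⁻¹ = ζ^2 := by
    apply inv_eq_of_mul_eq_one_right; linear_combination h5
  have c5 : cc ζ ^ 5 = 1 := by rw [← cc_pow, h5, cc_one]
  have := five_prod c5 (cc_five hζ) RR RR_dvd
  rw [jb_prod hz RR_dvd, jb_prod (pow_ne_zero 3 hz) RR_dvd, i1, i3, one_mul, cc_pow, cc_pow, cc_pow]
  unfold P15
  rw [← this]
  unfold P3
  ring

/-- antisymmetric residue class may be dropped -/
lemma SupR.tsum5 {f : ℤ → PS} (h : LF f) {T : Set (ZMod 5)}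
    (h3 : ∀ n : ℤ, (n : ZMod 5) = 3 → f (1 - n) = - f n)
    (hT : ∀ n : ℤ, (n : ZMod 5) ≠ 3 → SupR T (f n)) : SupR T (∑' n, f n) := by
  have l1 : LF (fun n : ℤ => if (n : ZMod 5) = 3 then f n else 0) :=
    h.mono (fun n => by split_ifs <;> simp)
  have l2 : LF (fun n : ℤ => if (n : ZMod 5) = 3 then 0 else f n) :=
    h.mono (fun n => by split_ifs <;> simp)
  have e : ∑' n, f n = ∑' n : ℤ, (if (n : ZMod 5) = 3 then 0 else f n) := by
    have h0 : ∑' n : ℤ, (if (n : ZMod 5) = 3 then f n else 0) = 0 := by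
      apply tsum_refl_zero
      intro n
      have : (((1 - n : ℤ) : ZMod 5) = 3) ↔ ((n : ZMod 5) = 3) := by
        push_cast
        generalize (n : ZMod 5) = a
        revert a; decide
      simp only [this]
      split_ifs with hn
      · exact h3 n hn
      · simp
    have h1 := l2.tsum_add l1
    rw [h0, add_zero] at h1
    rw [← h1]
    apply tsum_congr
    intro n
    split_ifs <;> simp
  rw [e]
  apply SupR.tsum l2
  intro n
  split_ifs with hn
  · intro k hk; simp at hk
  · exact hT n hn

lemma refl_zpow {w : ℂ} (hw : w ^ 5 = 1) {n : ℤ} (hn : (n : ZMod 5) = 3) : w ^ (1 - n) = w ^ n := by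
  apply zpow_mod hw (by rintro rfl; norm_num at hw)
  push_cast
  rw [hn]; decide

lemma jb_sup5 {w : ℂ} (hw : w ^ 5 = 1) (c : ℕ) (hc : 0 < c) :
    SupR ({0, (c : ZMod 5)} : Set (ZMod 5)) (jb w (qq ^ c)) := by
  unfold jb
  apply SupR.tsum5
  · apply lf_tri
    intro n
    exact ((pow_dvd_pow_of_dvd (dvd_pow_self qq hc.ne') _).mul_left _).mul_left _
  · intro n hn
    rw [refl_zpow hw hn, tri_symm, sgn_symm]; ring
  · intro n hn
    refine (SupR.sgnmul ?_ n).cmul _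
    rw [← pow_mul]
    apply SupR.qpow
    have h := tri_zmod 5 n
    push_cast
    have h2 : (tri n : ZMod 5) = 0 ∨ (tri n : ZMod 5) = 1 := by
      generalize (n : ZMod 5) = a at *
      generalize (tri n : ZMod 5) = b at *
      revert a b; decide
    rcases h2 with h2 | h2 <;> rw [h2] <;> simp

lemma jj_jb {z : ℂ} (hz : z ≠ 0) : jj z = jb z (qq ^ 1) := by
  rw [jj_eq hz, pow_one]; rfl

lemma jj_sup5 {w : ℂ} (hw : w ^ 5 = 1) : SupR ({0, 1} : Set (ZMod 5)) (jj w) := by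
  rw [jj_jb (by rintro rfl; norm_num at hw)]
  simpa using jb_sup5 hw 1 one_pos

lemma ff_sup5 {w : ℂ} (hw : w ^ 5 = 1) : SupR ({0, 1, 2, 3} : Set (ZMod 5)) (ff w) := by
  rw [ff_eq (by rintro rfl; norm_num at hw)]
  apply SupR.tsum5 (lf_ph.mul_left _)
  · intro n hn
    rw [refl_zpow hw hn, ph_symm]; ring
  · intro n hn
    exact (ph_sup5 n hn).cmul _

lemma S_sup {ζ : ℂ} (hζ : IsPrimitiveRoot ζ 5) (S J : PS)
    (hJ : SupR ({0, 1} : Set (ZMod 5)) J)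
    (h : S * DD ζ = J * (qq * P3 * jb ζ RR ^ 2)) (r : ZMod 5) (hr : r = 3 ∨ r = 4) : rcmp r S = 0 := by
  have hz : ζ ≠ 0 := hζ.ne_zero (by norm_num)
  have h1 : ζ ≠ 1 := hζ.ne_one (by norm_num)
  have h5 : ζ ^ 5 = 1 := hζ.pow_eq_one
  have h31 : ζ ^ 3 ≠ 1 := hζ.pow_ne_one_of_pos_of_lt (by norm_num) (by norm_num)
  have h2 := DD_ne hz h1 S J h
  rw [jb_jb hζ] at h2
  have h3 : P15 * (cc ((1 - ζ) * (1 - ζ^3)) * S) = qq ^ 1 * J * jb (ζ^3) (qq^9) := by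
    apply mul_left_cancel₀ P3_ne
    have e : cc ((1 - ζ) * (1 - ζ^3)) = (1 - cc ζ) * (1 - cc (ζ^3)) := by
      rw [cc_mul]
      simp only [cc, map_sub, map_one]
    rw [e]
    rw [show RR ^ 3 = qq ^ 9 by rw [← pow_mul]] at h2
    linear_combination h2
  have hs : SupR ({0, 1, 2} : Set (ZMod 5)) (qq ^ 1 * J * jb (ζ^3) (qq^9)) := by
    have a : SupR ({1} : Set (ZMod 5)) (qq ^ 1) := SupR.qpow 1 (by simp)
    have b : SupR ({1, 2} : Set (ZMod 5)) (qq ^ 1 * J) := by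
      refine a.mul hJ ?_
      simp only [Set.mem_singleton_iff, Set.mem_insert_iff]
      decide
    refine b.mul (jb_sup5 (by rw [← pow_mul, mul_comm, pow_mul, h5, one_pow]) 9 (by norm_num)) ?_
    simp only [Set.mem_singleton_iff, Set.mem_insert_iff]
    decide
  have h4 := hs.rcmp_eq_zero r (by
    simp only [Set.mem_singleton_iff, Set.mem_insert_iff]
    revert r; decide)
  rw [← h3, rcmp_mul P15_sup, sub_zero, rcmp_cc] at h4
  have h6 := (mul_eq_zero.1 h4).resolve_left P15_ne
  refine (mul_eq_zero.1 h6).resolve_left ?_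
  intro hc
  have := PowerSeries.C_injective (hc.trans (map_zero _).symm)
  rcases mul_eq_zero.1 this with h | h
  · exact h1 (sub_eq_zero.1 h).symm
  · exact h31 (sub_eq_zero.1 h).symm

lemma S1_sup {ζ : ℂ} (hζ : IsPrimitiveRoot ζ 5) (r : ZMod 5) (hr : r = 3 ∨ r = 4) :
    rcmp r (rcmp (1 : ZMod 3) (SS ζ)) = 0 :=
  S_sup hζ _ _ ((jj_sup5 hζ.pow_eq_one).part _) (S1_DD (hζ.ne_zero (by norm_num))) r hr

lemma S2_sup {ζ : ℂ} (hζ : IsPrimitiveRoot ζ 5) (r : ZMod 5) (hr : r = 3 ∨ r = 4) :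
    rcmp r (rcmp (2 : ZMod 3) (SS ζ)) = 0 :=
  S_sup hζ _ _ ((jj_sup5 hζ.pow_eq_one).part _).neg (S2_DD (hζ.ne_zero (by norm_num))) r hr

lemma coeff_tq (c : ℂ) (n : ℤ) (k : ℕ) (h : tri n ≠ k) : PowerSeries.coeff k (cc c * tq n) = 0 := by
  unfold tq sgn
  rw [PowerSeries.coeff_C_mul]
  rcases Int.units_eq_one_or n.negOnePow with h' | h' <;> rw [h'] <;>
    simp [PowerSeries.coeff_X_pow, h.symm]

lemma jj_coeff0 {z : ℂ} (hz : z ≠ 0) : PowerSeries.coeff 0 (jj z) = 1 - z := by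
  rw [jj_eq hz, LF.coeff_tsum_eq_sum (lf_tq.mul_left _) 0 {0, 1}]
  · rw [Finset.sum_pair (by norm_num)]
    have a : tri 0 = 0 := by simp [tri]
    have b : tri 1 = 0 := by simp [tri]
    simp [tq, a, b, sgn_zero, sgn_one]
    ring
  · intro n hn
    apply coeff_tq
    intro h
    have := two_tri n
    rw [h] at this
    simp only [Finset.mem_insert, Finset.mem_singleton, not_or] at hn
    have h2 : n * (n-1) = 0 := by simpa using this.symm
    rcases mul_eq_zero.1 h2 with h | h <;> omega

lemma jj_coeff1 {z : ℂ} (hz : z ≠ 0) : PowerSeries.coeff 1 (jj z) = z^2 - z⁻¹ := by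
  rw [jj_eq hz, LF.coeff_tsum_eq_sum (lf_tq.mul_left _) 1 {2, -1}]
  · rw [Finset.sum_pair (by norm_num)]
    have a : tri 2 = 1 := by simp [tri]
    have b : tri (-1) = 1 := by simp [tri]
    have c : sgn 2 = 1 := by rw [show (2:ℤ) = 1 + 1 by norm_num, sgn_add, sgn_one]; norm_num
    have d : sgn (-1) = -1 := by rw [sgn_neg, sgn_one]
    simp [tq, a, b, c, d]
    rw [sub_eq_add_neg]
  · intro n hn
    apply coeff_tq
    intro h
    have := two_tri n
    rw [h] at this
    simp only [Finset.mem_insert, Finset.mem_singleton, not_or] at hn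
    have h2 : (n - 2) * (n + 1) = 0 := by push_cast at this; linarith
    rcases mul_eq_zero.1 h2 with h | h <;> omega

theorem mod5_vanish {ζ : ℂ} (hζ : IsPrimitiveRoot ζ 5) :
    rcmp (3 : ZMod 5) (SS ζ) = 0 ∧ rcmp (4 : ZMod 5) (SS ζ) = 0 := by
  have hz : ζ ≠ 0 := hζ.ne_zero (by norm_num)
  have h5 : ζ ^ 5 = 1 := hζ.pow_eq_one
  have h1 : ζ ≠ 1 := hζ.ne_one (by norm_num)
  have h31 : ζ ^ 3 ≠ 1 := hζ.pow_ne_one_of_pos_of_lt (by norm_num) (by norm_num)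
  set t0 := rcmp (0 : ZMod 5) (jj ζ) with ht0
  set t1 := rcmp (1 : ZMod 5) (jj ζ) with ht1
  set s3 := rcmp (3 : ZMod 5) (SS ζ) with hs3
  set s4 := rcmp (4 : ZMod 5) (SS ζ) with hs4
  have hsplit : jj ζ = t0 + t1 := by
    have hsum := sum_rcmp (m := 5) (jj ζ)
    have hh : ∑ r : ZMod 5, rcmp r (jj ζ) = rcmp (0 : ZMod 5) (jj ζ) + rcmp (1 : ZMod 5) (jj ζ) +
      rcmp (2 : ZMod 5) (jj ζ) + rcmp (3 : ZMod 5) (jj ζ) + rcmp (4 : ZMod 5) (jj ζ) :=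
      Fin.sum_univ_five _
    rw [hh, (jj_sup5 h5).rcmp_eq_zero 2 (by simp; decide), (jj_sup5 h5).rcmp_eq_zero 3 (by simp; decide),
      (jj_sup5 h5).rcmp_eq_zero 4 (by simp; decide)] at hsum
    simp only [add_zero] at hsum
    exact hsum.symm
  have key : s4 * t0 + s3 * t1 = 0 := by
    have h := (ff_sup5 h5).rcmp_eq_zero 4 (by simp; decide)
    rw [← SS_mul_jj hz, hsplit, mul_add, rcmp_add, rcmp_mul' (SupR.rcmp_self 0 _),
      rcmp_mul' (SupR.rcmp_self 1 _)] at h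
    rw [show (4 : ZMod 5) - 0 = 4 by decide, show (4 : ZMod 5) - 1 = 3 by decide] at h
    exact h
  have sup0 : ∀ r : ZMod 5, (r = 3 ∨ r = 4) → SupR ({0} : Set (ZMod 3)) (rcmp r (SS ζ)) := by
    intro r hr
    have hsum := sum_rcmp (m := 3) (rcmp r (SS ζ))
    have hh : ∑ i : ZMod 3, rcmp i (rcmp r (SS ζ)) = rcmp (0 : ZMod 3) (rcmp r (SS ζ)) +
      rcmp (1 : ZMod 3) (rcmp r (SS ζ)) + rcmp (2 : ZMod 3) (rcmp r (SS ζ)) := Fin.sum_univ_three _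
    rw [hh, rcmp_cmp_comm (1 : ZMod 3) r, rcmp_cmp_comm (2 : ZMod 3) r, S1_sup hζ r hr, S2_sup hζ r hr,
      add_zero, add_zero] at hsum
    rw [← hsum]
    exact SupR.rcmp_self _ _
  have k3 := sup0 3 (Or.inl rfl)
  have k4 := sup0 4 (Or.inr rfl)
  have kr : ∀ r : ZMod 3, s4 * rcmp r t0 + s3 * rcmp r t1 = 0 := by
    intro r
    have := congrArg (rcmp r) key
    rw [rcmp_add, rcmp_mul k4, rcmp_mul k3, sub_zero, rcmp_zero] at this
    exact this
  have c1 : PowerSeries.coeff 1 (jj ζ) ≠ 0 := by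
    rw [jj_coeff1 hz]
    intro h
    apply h31
    field_simp at h
    linear_combination h
  have c0 : PowerSeries.coeff 0 (jj ζ) ≠ 0 := by
    rw [jj_coeff0 hz]
    intro h
    exact h1 (sub_eq_zero.1 h).symm
  have z10 : ¬ (((1 : ℕ) : ZMod 5) = 0) := by decide
  have z01 : ¬ (((0 : ℕ) : ZMod 3) = 1) := by decide
  have p11 : (((1 : ℕ) : ZMod 5) = 1) := by decide
  have p11' : (((1 : ℕ) : ZMod 3) = 1) := by decide
  have p00 : (((0 : ℕ) : ZMod 5) = 0) := by decide
  have p00' : (((0 : ℕ) : ZMod 3) = 0) := by decide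
  have hdet : rcmp (0 : ZMod 3) t0 * rcmp (1 : ZMod 3) t1 - rcmp (1 : ZMod 3) t0 * rcmp (0 : ZMod 3) t1 ≠ 0 := by
    intro h
    have := congrArg (PowerSeries.coeff 1) h
    rw [map_sub, PowerSeries.coeff_mul, PowerSeries.coeff_mul,
      show Finset.HasAntidiagonal.antidiagonal 1 = {(0,1),(1,0)} by decide, Finset.sum_pair (by decide),
      Finset.sum_pair (by decide), map_zero] at this
    simp only [ht0, ht1, coeff_rcmp, if_neg z10, if_neg z01, if_pos p11, if_pos p11', if_pos p00,
      if_pos p00', ite_self, zero_mul, mul_zero, add_zero, sub_zero] at this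
    exact mul_ne_zero c0 c1 this
  have e4 : s4 = 0 := by
    have : s4 * (rcmp (0 : ZMod 3) t0 * rcmp (1 : ZMod 3) t1 -
      rcmp (1 : ZMod 3) t0 * rcmp (0 : ZMod 3) t1) = 0 := by
      linear_combination rcmp (1 : ZMod 3) t1 * kr 0 - rcmp (0 : ZMod 3) t1 * kr 1
    exact (mul_eq_zero.1 this).resolve_right hdet
  refine ⟨?_, e4⟩
  rw [e4, zero_mul, zero_add] at key
  refine (mul_eq_zero.1 key).resolve_right ?_
  intro h
  have := congrArg (PowerSeries.coeff 1) h
  rw [ht1, coeff_rcmp, if_pos p11, map_zero] at this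
  exact c1 this

lemma coeff_of_rcmp {m : ℕ} {r : ZMod m} {f : PS} (h : rcmp r f = 0) (n : ℕ) (hn : (n : ZMod m) = r) :
    PowerSeries.coeff n f = 0 := by
  have := congrArg (PowerSeries.coeff n) h
  rwa [coeff_rcmp, if_pos hn, map_zero] at this

theorem paircrank_equidistribution (n : ℕ) :
    (∀ i j : ZMod 3,
      {p : Multiset ℕ × Multiset ℕ | InST p ∧ p.1.sum + p.2.sum = 3 * n + 2 ∧
        ((paircrank p : ZMod 3) = i)}.ncard =
      {p : Multiset ℕ × Multiset ℕ | InST p ∧ p.1.sum + p.2.sum = 3 * n + 2 ∧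
        ((paircrank p : ZMod 3) = j)}.ncard) ∧
    (∀ i j : ZMod 5,
      {p : Multiset ℕ × Multiset ℕ | InST p ∧ p.1.sum + p.2.sum = 5 * n + 3 ∧
        ((paircrank p : ZMod 5) = i)}.ncard =
      {p : Multiset ℕ × Multiset ℕ | InST p ∧ p.1.sum + p.2.sum = 5 * n + 3 ∧
        ((paircrank p : ZMod 5) = j)}.ncard) ∧
    (∀ i j : ZMod 5,
      {p : Multiset ℕ × Multiset ℕ | InST p ∧ p.1.sum + p.2.sum = 5 * n + 4 ∧
        ((paircrank p : ZMod 5) = i)}.ncard =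
      {p : Multiset ℕ × Multiset ℕ | InST p ∧ p.1.sum + p.2.sum = 5 * n + 4 ∧
        ((paircrank p : ZMod 5) = j)}.ncard) := by
  refine ⟨?_, ?_, ?_⟩
  · intro i j
    have hω : IsPrimitiveRoot _ (2+1) := Complex.isPrimitiveRoot_exp 3 (by norm_num)
    refine counts_eq (m := 2) (by norm_num) hω _ (coeff_of_rcmp (mod3_vanish hω) _ ?_) i j
    push_cast
    rw [show (3 : ZMod 3) = 0 by decide]; simp
  · intro i j
    have hω : IsPrimitiveRoot _ (4+1) := Complex.isPrimitiveRoot_exp 5 (by norm_num)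
    refine counts_eq (m := 4) (by norm_num) hω _ (coeff_of_rcmp (mod5_vanish hω).1 _ ?_) i j
    push_cast
    rw [show (5 : ZMod 5) = 0 by decide]; simp
  · intro i j
    have hω : IsPrimitiveRoot _ (4+1) := Complex.isPrimitiveRoot_exp 5 (by norm_num)
    refine counts_eq (m := 4) (by norm_num) hω _ (coeff_of_rcmp (mod5_vanish hω).2 _ ?_) i j
    push_cast
    rw [show (5 : ZMod 5) = 0 by decide]; simp
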